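/- For all integers b > a ≥ 1 with gcd(a,b) = 1, the number π*(a,b) of primes not representable as au + bv with u, v nonnegative integers satisfies π*(a,b) ≥ 0.04 · π(S(a,b)), where S(a,b) = ab − a − b and π(x) is the number of primes not exceeding x. -/

import Mathlib

/-- `piStar a b` is the number of primes not representable as `a*u + b*v`
with `u, v` nonnegative integers, i.e. the number of primes not in the
numerical semigroup `⟨a, b⟩`. -/
noncomputable def piStar (a b : ℕ) : ℕ :=
  Set.ncard {p : ℕ | p.Prime ∧ ¬ ∃ u v : ℕ, p = a * u + b * v}

/-- `S a b = a*b - a - b` (the Frobenius-type quantity). -/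
def S (a b : ℕ) : ℕ := a * b - a - b

section
open Real

lemma logfac_lower (n : ℕ) : (n:ℝ) * log (n+1) - n ≤ log (n.factorial : ℝ) := by
  induction n with
  | zero => simp
  | succ k ih =>
    rw [Nat.factorial_succ]
    push_cast
    rw [log_mul (by positivity) (by positivity)]
    have h1 : log ((k:ℝ)+1+1) ≤ log ((k:ℝ)+1) + 1/((k:ℝ)+1) := by
      have : ((k:ℝ)+1+1) = ((k:ℝ)+1) * (1 + 1/((k:ℝ)+1)) := by field_simp
      rw [this, log_mul (by positivity) (by positivity)]
      have := Real.log_le_sub_one_of_pos (x := 1 + 1/((k:ℝ)+1)) (by positivity)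
      linarith
    have h2 : ((k:ℝ)+1) * log ((k:ℝ)+1+1) ≤ ((k:ℝ)+1) * log ((k:ℝ)+1) + 1 := by
      calc _ ≤ ((k:ℝ)+1) * (log ((k:ℝ)+1) + 1/((k:ℝ)+1)) := by gcongr
        _ = _ := by field_simp
    linarith

lemma logfac_upper (n : ℕ) (hn : 1 ≤ n) : log (n.factorial : ℝ) ≤ n * log n - n + 1 + log n := by
  induction n, hn using Nat.le_induction with
  | base => simp
  | succ k hk ih =>
    rw [Nat.factorial_succ]
    push_cast
    have hk' : (1:ℝ) ≤ k := by exact_mod_cast hk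
    rw [log_mul (by positivity) (by positivity)]
    have h1 : log (k:ℝ) ≤ log ((k:ℝ)+1) - 1/((k:ℝ)+1) := by
      have : (k:ℝ) = ((k:ℝ)+1) * (1 - 1/((k:ℝ)+1)) := by field_simp; ring
      have h3 : 0 < 1 - 1/((k:ℝ)+1) := by
        rw [sub_pos, div_lt_one (by positivity)]; linarith
      conv_lhs => rw [this, log_mul (by positivity) h3.ne']
      have := Real.log_le_sub_one_of_pos h3
      linarith
    have h2 : ((k:ℝ)+1) * log (k:ℝ) ≤ ((k:ℝ)+1) * log ((k:ℝ)+1) - 1 := by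
      calc _ ≤ ((k:ℝ)+1) * (log ((k:ℝ)+1) - 1/((k:ℝ)+1)) := by gcongr
        _ = _ := by field_simp
    linarith

lemma T_upper (n : ℕ) (y : ℝ) (hn : 1 ≤ n) (h1 : (n:ℝ) ≤ y) :
    log (n.factorial : ℝ) ≤ y * log y - y + 1 + log y := by
  have h := logfac_upper n hn
  have hn' : (1:ℝ) ≤ n := by exact_mod_cast hn
  have h2 : log n ≤ log y := log_le_log (by linarith) h1
  have h3 : log n ≤ log y + (n/y - 1) := by
    have := Real.log_le_sub_one_of_pos (x := (n:ℝ)/y) (by apply div_pos <;> linarith)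
    rw [log_div (by linarith) (by linarith)] at this
    linarith
  have hy : 0 < y := by linarith
  have h4 : y * log n ≤ y * log y + (n - y) := by
    calc _ ≤ y * (log y + (n/y - 1)) := by gcongr
      _ = _ := by field_simp
  have h5 : 0 ≤ (y - n) * log n := mul_nonneg (by linarith) (log_nonneg hn')
  nlinarith

lemma T_lower (n : ℕ) (y : ℝ) (hn : 2 ≤ n) (h1 : (n:ℝ) ≤ y) (h2 : y ≤ n + 1) :
    y * log y - y + 1 - log y ≤ log (n.factorial : ℝ) := by
  have h := logfac_lower n
  have hn' : (2:ℝ) ≤ n := by exact_mod_cast hn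
  have h3 : log y ≤ log (n+1) + (y/(n+1) - 1) := by
    have := Real.log_le_sub_one_of_pos (x := (y:ℝ)/(n+1)) (by apply div_pos <;> linarith)
    rw [log_div (by linarith) (by linarith)] at this
    linarith
  have h4 : (y-1) * log y ≤ (y-1)*(log (n+1) + (y/(n+1) - 1)) :=
    mul_le_mul_of_nonneg_left h3 (by linarith)
  have h5 : (1:ℝ) ≤ log (n+1) := by
    rw [Real.le_log_iff_exp_le (by linarith)]
    have := Real.exp_one_lt_d9
    linarith
  have h6 : y/(n+1) - 1 ≤ 0 := by
    rw [sub_nonpos, div_le_one (by linarith)]; exact h2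
  nlinarith

end

section
open Real
open ArithmeticFunction (vonMangoldt vonMangoldt_sum vonMangoldt_nonneg vonMangoldt_apply_prime)
open scoped Chebyshev

lemma logfac_eq (N : ℕ) (M : ℕ) (h : N ≤ M) :
    log (N.factorial : ℝ) = ∑ d ∈ Finset.Ioc 0 M, vonMangoldt d * ((N / d : ℕ) : ℝ) := by
  have h1 : ∀ N ≤ M, log (N.factorial : ℝ) = ∑ d ∈ Finset.Ioc 0 M, vonMangoldt d * ((N / d : ℕ) : ℝ) := by
    intro N
    induction N with
    | zero => simp
    | succ k ih =>
      intro hk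
      rw [Nat.factorial_succ]
      push_cast
      rw [log_mul (by positivity) (by positivity), ih (by omega)]
      have : log ((k:ℝ)+1) = ∑ d ∈ Finset.Ioc 0 M, vonMangoldt d * (if d ∣ k+1 then 1 else 0) := by
        have h2 := vonMangoldt_sum (n := k+1)
        push_cast at h2
        rw [← h2]
        simp only [mul_ite, mul_one, mul_zero]
        rw [← Finset.sum_filter]
        apply Finset.sum_congr
        · ext d
          simp only [Nat.mem_divisors, Finset.mem_filter, Finset.mem_Ioc]
          constructor
          · rintro ⟨h, _⟩
            exact ⟨⟨Nat.pos_of_dvd_of_pos h (by omega), (Nat.le_of_dvd (by omega) h).trans hk⟩, h⟩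
          · rintro ⟨_, h⟩
            exact ⟨h, by omega⟩
        · intros; rfl
      rw [this, ← Finset.sum_add_distrib]
      apply Finset.sum_congr rfl
      intro d hd
      rw [← mul_add, Nat.succ_div]
      split_ifs <;> push_cast <;> ring
  exact h1 N h

noncomputable def EE (N : ℕ) : ℝ := log (N.factorial : ℝ) - log ((N/2).factorial : ℝ) - log ((N/3).factorial : ℝ)
  - log ((N/5).factorial : ℝ) + log ((N/30).factorial : ℝ)

lemma EE_eq (N : ℕ) : EE N = ∑ d ∈ Finset.Ioc 0 N, vonMangoldt d *
    (((N/d : ℕ):ℝ) - ((N/d/2 : ℕ):ℝ) - ((N/d/3 : ℕ):ℝ) - ((N/d/5 : ℕ):ℝ) + ((N/d/30 : ℕ):ℝ)) := by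
  unfold EE
  rw [logfac_eq N N le_rfl, logfac_eq (N/2) N (Nat.div_le_self _ _), logfac_eq (N/3) N (Nat.div_le_self _ _),
    logfac_eq (N/5) N (Nat.div_le_self _ _), logfac_eq (N/30) N (Nat.div_le_self _ _)]
  rw [← Finset.sum_sub_distrib, ← Finset.sum_sub_distrib, ← Finset.sum_sub_distrib, ← Finset.sum_add_distrib]
  apply Finset.sum_congr rfl
  intro d hd
  rw [Nat.div_div_eq_div_mul N 2 d, Nat.div_div_eq_div_mul N 3 d, Nat.div_div_eq_div_mul N 5 d,
    Nat.div_div_eq_div_mul N 30 d, mul_comm 2 d, mul_comm 3 d, mul_comm 5 d, mul_comm 30 d,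
    ← Nat.div_div_eq_div_mul, ← Nat.div_div_eq_div_mul, ← Nat.div_div_eq_div_mul, ← Nat.div_div_eq_div_mul]
  ring

lemma cc_le (k : ℕ) : ((k : ℕ):ℝ) - ((k/2 : ℕ):ℝ) - ((k/3 : ℕ):ℝ) - ((k/5 : ℕ):ℝ) + ((k/30 : ℕ):ℝ) ≤ 1 := by
  have : k + k/30 ≤ 1 + k/2 + k/3 + k/5 := by omega
  have : ((k + k/30 : ℕ):ℝ) ≤ ((1 + k/2 + k/3 + k/5 : ℕ):ℝ) := by exact_mod_cast this
  push_cast at this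
  linarith

lemma cc_ge (k : ℕ) : 0 ≤ ((k : ℕ):ℝ) - ((k/2 : ℕ):ℝ) - ((k/3 : ℕ):ℝ) - ((k/5 : ℕ):ℝ) + ((k/30 : ℕ):ℝ) := by
  have : k/2 + k/3 + k/5 ≤ k + k/30 := by omega
  have : ((k/2 + k/3 + k/5 : ℕ):ℝ) ≤ ((k + k/30 : ℕ):ℝ) := by exact_mod_cast this
  push_cast at this
  linarith

lemma cc_ge1 (k : ℕ) (h1 : 1 ≤ k) (h5 : k ≤ 5) : 1 ≤ ((k : ℕ):ℝ) - ((k/2 : ℕ):ℝ) - ((k/3 : ℕ):ℝ) - ((k/5 : ℕ):ℝ) + ((k/30 : ℕ):ℝ) := by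
  have : 1 + k/2 + k/3 + k/5 ≤ k + k/30 := by omega
  have : ((1+k/2 + k/3 + k/5 : ℕ):ℝ) ≤ ((k + k/30 : ℕ):ℝ) := by exact_mod_cast this
  push_cast at this
  linarith

lemma EE_le_psi (N : ℕ) : EE N ≤ Chebyshev.psi N := by
  rw [EE_eq, Chebyshev.psi, Nat.floor_natCast]
  apply Finset.sum_le_sum
  intro d hd
  have := cc_le (N/d)
  calc _ ≤ vonMangoldt d * 1 := by gcongr
    _ = _ := by ring

lemma theta_diff_le_EE (N : ℕ) : Chebyshev.theta N - Chebyshev.theta ((N/6 : ℕ)) ≤ EE N := by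
  rw [EE_eq, Chebyshev.theta, Chebyshev.theta, Nat.floor_natCast, Nat.floor_natCast]
  have h : (Finset.Ioc 0 (N/6)).filter Nat.Prime ⊆ (Finset.Ioc 0 N).filter Nat.Prime := by
    apply Finset.filter_subset_filter
    apply Finset.Ioc_subset_Ioc_right
    omega
  rw [sub_le_iff_le_add, ← Finset.sum_sdiff h]
  gcongr
  have hs : (Finset.Ioc 0 N).filter Nat.Prime \ (Finset.Ioc 0 (N/6)).filter Nat.Prime ⊆ Finset.Ioc 0 N := by
    intro x hx
    simp at hx ⊢
    omega
  refine le_trans ?_ (Finset.sum_le_sum_of_subset_of_nonneg hs ?_)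
  · apply Finset.sum_le_sum
    intro d hd
    simp only [Finset.mem_sdiff, Finset.mem_filter, Finset.mem_Ioc, not_and] at hd
    obtain ⟨⟨⟨h0, hN⟩, hp⟩, hn⟩ := hd
    rw [vonMangoldt_apply_prime hp]
    have hl : 0 ≤ log (d:ℝ) := log_natCast_nonneg d
    have h6 : N/6 < d := by
      by_contra hh
      exact hn ⟨h0, by omega⟩ hp
    have h7 := cc_ge1 (N/d) ((Nat.one_le_div_iff h0).2 hN) (by
      have : N < 6 * d := by omega
      have := (Nat.div_lt_iff_lt_mul h0).2 this
      omega)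
    calc log (d:ℝ) = log d * 1 := by ring
      _ ≤ _ := by gcongr
  · intro d _ _
    exact mul_nonneg vonMangoldt_nonneg (cc_ge _)

end

section
open Real
noncomputable def AA : ℝ := log 2 / 2 + log 3 / 3 + log 5 / 5 - log 30 / 30
lemma log30 : log (30:ℝ) = log 2 + log 3 + log 5 := by
  rw [← log_mul (by norm_num) (by norm_num), ← log_mul (by norm_num) (by norm_num)]; norm_num
lemma AA_lo : 0.92129 ≤ AA := by
  unfold AA; rw [log30]
  linarith [log_two_gt_d9, log_three_gt_d9, log_five_gt_d9, log_two_lt_d9, log_three_lt_d9, log_five_lt_d9]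
lemma AA_hi : AA ≤ 0.9213 := by
  unfold AA; rw [log30]
  linarith [log_two_gt_d9, log_three_gt_d9, log_five_gt_d9, log_two_lt_d9, log_three_lt_d9, log_five_lt_d9]

lemma div_real (N k : ℕ) (hk : 0 < k) : ((N/k : ℕ):ℝ) ≤ (N:ℝ)/k ∧ (N:ℝ)/k ≤ ((N/k : ℕ):ℝ) + 1 := by
  have hk' : (0:ℝ) < k := by exact_mod_cast hk
  constructor
  · exact Nat.cast_div_le
  · rw [div_le_iff₀ hk']
    have : N ≤ (N/k+1)*k := by
      have := Nat.div_add_mod N k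
      have h2 := Nat.mod_lt N hk
      nlinarith
    exact_mod_cast this

lemma EE_bounds (N : ℕ) (hN : 60 ≤ N) :
    AA * N - 5 * log N + 5 ≤ EE N ∧ EE N ≤ AA * N + 5 * log N - 7 := by
  have hN' : (60:ℝ) ≤ N := by exact_mod_cast hN
  have hN0 : (N:ℝ) ≠ 0 := by linarith
  have key : ∀ k : ℕ, 0 < k → k ≤ 30 → (N:ℝ)/k * (log N - log k) - N/k + 1 - (log N - log k) ≤ log ((N/k).factorial : ℝ) ∧
     log ((N/k).factorial : ℝ) ≤ (N:ℝ)/k * (log N - log k) - N/k + 1 + (log N - log k) := by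
    intro k hk h30
    have hk' : (k:ℝ) ≠ 0 := by positivity
    have h2 : 2 ≤ N/k := by
      rw [Nat.le_div_iff_mul_le hk]; omega
    obtain ⟨ha, hb⟩ := div_real N k hk
    rw [← log_div hN0 hk']
    exact ⟨T_lower _ _ h2 ha hb, T_upper _ _ (by omega) ha⟩
  obtain ⟨a1, b1⟩ := key 1 (by norm_num) (by norm_num)
  obtain ⟨a2, b2⟩ := key 2 (by norm_num) (by norm_num)
  obtain ⟨a3, b3⟩ := key 3 (by norm_num) (by norm_num)
  obtain ⟨a5, b5⟩ := key 5 (by norm_num) (by norm_num)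
  obtain ⟨a30, b30⟩ := key 30 (by norm_num) (by norm_num)
  simp only [Nat.div_one] at a1 b1
  norm_num at a1 b1 a2 b2 a3 b3 a5 b5 a30 b30
  unfold EE AA
  rw [log30] at *
  constructor <;> linarith [log_two_gt_d9, log_three_gt_d9, log_five_gt_d9, log_two_lt_d9, log_three_lt_d9, log_five_lt_d9]

lemma pi_lower (N : ℕ) (hN : 60 ≤ N) : 0.92129 * N - 5 * log N ≤ (Nat.primeCounting N : ℝ) * log N := by
  have h1 := (EE_bounds N hN).1
  have h2 := EE_le_psi N
  have h3 := Chebyshev.psi_le_primeCounting_mul_log N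
  have := AA_lo
  nlinarith [(Nat.cast_nonneg N : (0:ℝ) ≤ N)]

lemma theta_upper (N : ℕ) (hN : 2000 ≤ N) : Chebyshev.theta N ≤ 1.1135 * N + 10 * log N := by
  have h1 := (EE_bounds N (by omega)).2
  have h2 := (EE_bounds (N/6) (by omega)).2
  have h3 := theta_diff_le_EE N
  have h4 := theta_diff_le_EE (N/6)
  have h5 := Chebyshev.theta_le_log4_mul_x (x := ((N/6/6:ℕ):ℝ)) (by positivity)
  have h6 := (div_real N 6 (by norm_num)).1
  have h7 := (div_real (N/6) 6 (by norm_num)).1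
  push_cast at *
  have hl : log ((N/6:ℕ):ℝ) ≤ log N := by
    apply log_le_log
    · have : 0 < N/6 := by omega
      exact_mod_cast this
    · have : N/6 ≤ N := by omega
      exact_mod_cast this
  have h4' : log (4:ℝ) ≤ 1.3863 := by
    have : (4:ℝ) = 2^2 := by norm_num
    rw [this, log_pow]; push_cast; linarith [log_two_lt_d9]
  have := AA_hi
  have := AA_lo
  have e1 : log 4 * ((N/6/6:ℕ):ℝ) ≤ 1.3863 * ((N/6/6:ℕ):ℝ) := by gcongr
  have e2 : AA * ((N/6:ℕ):ℝ) ≤ 0.9213 * ((N/6:ℕ):ℝ) := by gcongr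
  have e3 : AA * (N:ℝ) ≤ 0.9213 * N := by gcongr
  linarith

end

section
open Real

lemma log4_le : log (4:ℝ) ≤ 1.3863 := by
    have : (4:ℝ) = 2^2 := by norm_num
    rw [this, log_pow]; push_cast; linarith [log_two_lt_d9]

lemma log256 : log (256:ℝ) = 8 * log 2 := by
    have : (256:ℝ) = 2^8 := by norm_num
    rw [this, log_pow]; push_cast; ring

lemma pi256 : Nat.primeCounting 256 = 54 := by decide +kernel
lemma primorial256 : 2^300 ≤ primorial 256 := by decide +kernel

lemma int_base : ∫ t in (2:ℝ)..256, Chebyshev.theta t / (t * log t ^ 2) ≤ 2.2181 * 256 / log 256 ^ 2 := by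
  have h := Chebyshev.primeCounting_eq_theta_div_log_add_integral (x := 256) (by norm_num)
  have hf : ⌊(256:ℝ)⌋₊ = 256 := by norm_num
  rw [hf, pi256] at h
  have ht : 207 ≤ Chebyshev.theta 256 := by
    rw [Chebyshev.theta_eq_log_primorial, hf]
    have h1 : ((2^300 : ℕ) : ℝ) ≤ (primorial 256 : ℝ) := by exact_mod_cast primorial256
    have h2 := log_le_log (by positivity) h1
    push_cast at h2
    rw [log_pow] at h2
    push_cast at h2
    linarith [log_two_gt_d9]
  have l1 : log (256:ℝ) ≤ 5.546 := by rw [log256]; linarith [log_two_lt_d9]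
  have l0 : 5.545 ≤ log (256:ℝ) := by rw [log256]; linarith [log_two_gt_d9]
  have h3 : 37.3 ≤ Chebyshev.theta 256 / log 256 := by
    rw [le_div_iff₀ (by linarith)]; nlinarith
  have h4 : 17 ≤ 2.2181 * 256 / log (256:ℝ) ^ 2 := by
    rw [le_div_iff₀ (by positivity)]; nlinarith
  push_cast at h
  linarith

lemma hasDeriv_aux (t : ℝ) (ht : 256 ≤ t) :
    HasDerivAt (fun t => 2.2181 * t / log t ^ 2) (2.2181 / log t ^ 2 - 2 * 2.2181 / log t ^ 3) t := by
  have l0 : 5.545 ≤ log t := by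
    have : log 256 ≤ log t := log_le_log (by norm_num) ht
    rw [log256] at this; linarith [log_two_gt_d9]
  have hl : log t ≠ 0 := by linarith
  have ht0 : t ≠ 0 := by linarith
  have h1 := ((hasDerivAt_id' t).const_mul 2.2181).fun_div ((Real.hasDerivAt_log ht0).fun_pow 2) (pow_ne_zero 2 hl)
  refine h1.congr_deriv ?_
  field_simp
  ring

lemma int_tail (x : ℝ) (hx : 256 ≤ x) : ∫ t in (256:ℝ)..x, Chebyshev.theta t / (t * log t ^ 2) ≤
    2.2181 * x / log x ^ 2 - 2.2181 * 256 / log 256 ^ 2 := by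
  have hlog : ∀ t ∈ Set.uIcc 256 x, 5.545 ≤ log t := by
    intro t ht
    rw [Set.uIcc_of_le hx] at ht
    have : log 256 ≤ log t := log_le_log (by norm_num) ht.1
    rw [log256] at this; linarith [log_two_gt_d9]
  have hint : IntervalIntegrable (fun t => 2.2181 / log t ^ 2 - 2 * 2.2181 / log t ^ 3) MeasureTheory.volume 256 x := by
    apply ContinuousOn.intervalIntegrable
    have hc : ContinuousOn log (Set.uIcc 256 x) := by
      apply Real.continuousOn_log.mono
      intro t ht
      rw [Set.uIcc_of_le hx] at ht
      simp; linarith [ht.1]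
    apply ContinuousOn.sub
    · exact ContinuousOn.div continuousOn_const (hc.pow 2) (fun t ht => by have := hlog t ht; positivity)
    · exact ContinuousOn.div continuousOn_const (hc.pow 3) (fun t ht => by have := hlog t ht; positivity)
  have h := intervalIntegral.integral_eq_sub_of_hasDerivAt (f := fun t => 2.2181 * t / log t ^ 2)
    (f' := fun t => 2.2181 / log t ^ 2 - 2 * 2.2181 / log t ^ 3) (a := 256) (b := x) (by
      intro t ht
      rw [Set.uIcc_of_le hx] at ht
      exact hasDeriv_aux t ht.1) hint
  rw [← h]
  apply intervalIntegral.integral_mono_on hx _ hint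
  · intro t ht
    have l0 := hlog t (by rw [Set.uIcc_of_le hx]; exact ht)
    have ht0 : 0 < t := by linarith [ht.1]
    have h1 := Chebyshev.theta_le_log4_mul_x ht0.le
    have h2 : Chebyshev.theta t ≤ 1.3863 * t := h1.trans (by have := log4_le; gcongr)
    have hl : 0 < log t := by linarith
    calc Chebyshev.theta t / (t * log t ^ 2) ≤ 1.3863 * t / (t * log t ^ 2) := by gcongr
      _ = 1.3863 / log t ^ 2 := by field_simp
      _ ≤ _ := by
        have : 2.2181 / log t ^ 2 - 2 * 2.2181 / log t ^ 3 - 1.3863 / log t ^ 2 = (0.8318 * log t - 4.4362)/ log t^3 := by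
          field_simp; ring
        have h3 : 0 ≤ (0.8318 * log t - 4.4362)/ log t^3 := by
          apply div_nonneg _ (by positivity); linarith
        linarith
  · rw [intervalIntegrable_iff_integrableOn_Icc_of_le hx]
    exact (Chebyshev.integrableOn_theta_div_id_mul_log_sq x).mono_set (Set.Icc_subset_Icc_left (by norm_num))

lemma pi_upper (N : ℕ) (hN : 2000 ≤ N) :
    (Nat.primeCounting N : ℝ) ≤ (1.1135 * N + 10 * log N) / log N + 2.2181 * N / log N ^ 2 := by
  have hN' : (2000:ℝ) ≤ N := by exact_mod_cast hN
  have h := Chebyshev.primeCounting_eq_theta_div_log_add_integral (x := N) (by linarith)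
  rw [Nat.floor_natCast] at h
  have hI : ∀ u v : ℝ, 2 ≤ u → u ≤ v → IntervalIntegrable (fun t => Chebyshev.theta t / (t * log t ^ 2)) MeasureTheory.volume u v := by
    intro u v hu huv
    rw [intervalIntegrable_iff_integrableOn_Icc_of_le huv]
    exact (Chebyshev.integrableOn_theta_div_id_mul_log_sq v).mono_set (Set.Icc_subset_Icc_left hu)
  rw [← intervalIntegral.integral_add_adjacent_intervals (hI 2 256 le_rfl (by norm_num)) (hI 256 N (by norm_num) (by linarith))] at h
  have h1 := int_base
  have h2 := int_tail N (by linarith)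
  have h3 := theta_upper N hN
  have hl : 0 < log (N:ℝ) := log_pos (by linarith)
  have h4 : Chebyshev.theta N / log N ≤ (1.1135 * N + 10 * log N) / log N := by gcongr
  linarith

end

section

def cnt (m s U : ℕ) : ℕ := Nat.count (fun u => Nat.Coprime (u+s) m) U

lemma cnt_add_period (m s U : ℕ) : cnt m s (U + m) = cnt m s m + cnt m s U := by
  unfold cnt
  rw [add_comm U m, Nat.count_add]
  congr 2
  ext k
  rw [show m + k + s = (k+s) + m by ring, Nat.coprime_add_self_left]

lemma coprime_of_modEq {x y m : ℕ} (h : x ≡ y [MOD m]) : Nat.Coprime x m ↔ Nat.Coprime y m := by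
  unfold Nat.Coprime
  rw [h.gcd_eq]

lemma cnt_mod (m s U : ℕ) : cnt m (s % m) U = cnt m s U := by
  unfold cnt
  congr 1
  ext k
  apply coprime_of_modEq
  exact Nat.ModEq.add_left _ (Nat.mod_modEq _ _)

def div30 : Finset ℕ := {1,2,3,5,6,10,15,30}

lemma div30_pos : ∀ m ∈ div30, 0 < m := by decide

set_option maxRecDepth 100000 in
lemma cnt_fin : ∀ m ∈ div30, ∀ s < m, cnt m s m = Nat.count (fun u => Nat.Coprime (u+1) m) m ∧
    ∀ U < m, 5 * (m * cnt m s U) ≤ 5 * (Nat.count (fun u => Nat.Coprime (u+1) m) m * U) + 8 * m := by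
  decide +kernel

lemma cnt_one_eq_totient (m : ℕ) : Nat.count (fun u => Nat.Coprime (u+1) m) m = m.totient := by
  have h : Nat.count (fun u => Nat.Coprime (u+1) m) m = Nat.count (fun u => Nat.Coprime u m) m := by
    have := Nat.count_succ' (fun u => Nat.Coprime u m) m
    have h2 := Nat.count_succ (fun u => Nat.Coprime u m) m
    simp only [Nat.coprime_zero_left, Nat.coprime_self] at this h2
    omega
  rw [h, Nat.totient, Nat.count_eq_card_filter_range]
  congr 1
  ext x
  simp [Nat.coprime_comm]

lemma cnt_bound (m s U : ℕ) (hm : m ∈ div30) : 5 * (m * cnt m s U) ≤ 5 * (m.totient * U) + 8 * m := by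
  have hm0 : 0 < m := div30_pos m hm
  have hs := Nat.mod_lt s hm0
  obtain ⟨h1, h2⟩ := cnt_fin m hm (s % m) hs
  rw [cnt_one_eq_totient] at h1 h2
  rw [cnt_mod] at h1
  induction U using Nat.strong_induction_on with
  | _ U ih =>
    by_cases hU : U < m
    · have := h2 U hU
      rwa [cnt_mod] at this
    · have h3 := ih (U - m) (by omega)
      have h4 := cnt_add_period m s (U - m)
      rw [show U - m + m = U by omega, h1] at h4
      obtain ⟨W, rfl⟩ : ∃ W, U = W + m := ⟨U - m, by omega⟩
      simp only [Nat.add_sub_cancel] at h3 h4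
      rw [h4]
      nlinarith

/-- wheel row bound -/
lemma wheel_count (m a r U : ℕ) (hm : m ∈ div30) (ha : Nat.Coprime a m) :
    (((Finset.range U).filter (fun u => Nat.Coprime (a*u+r) m)).card : ℝ) ≤
      ((m.totient : ℝ) / m) * U + 1.6 := by
  have hm0 : 0 < m := div30_pos m hm
  obtain ⟨a', ha'⟩ : ∃ a', a * a' ≡ 1 [MOD m] := by
    rcases Nat.lt_or_ge 1 m with h | h
    · obtain ⟨x, hx⟩ := Nat.exists_mul_mod_eq_one_of_coprime ha h
      exact ⟨x, by rw [Nat.ModEq, hx.2, Nat.mod_eq_of_lt h]⟩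
    · have : m = 1 := by omega
      subst this
      exact ⟨0, Nat.modEq_one⟩
  have h1 : ((Finset.range U).filter (fun u => Nat.Coprime (a*u+r) m)).card = cnt m (a' * r) U := by
    unfold cnt
    rw [Nat.count_eq_card_filter_range]
    congr 1
    apply Finset.filter_congr
    intro u _
    have h2 : a * u + r ≡ a * (u + a' * r) [MOD m] := by
      have : a * (u + a'*r) = a * u + (a * a') * r := by ring
      rw [this]
      have := (ha'.mul_right r).symm
      rw [one_mul] at this
      exact Nat.ModEq.add_left _ this
    rw [coprime_of_modEq h2]
    constructor
    · exact fun h => Nat.Coprime.coprime_mul_left h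
    · exact fun h => Nat.Coprime.mul_left ha h
  rw [h1]
  have h2 := cnt_bound m (a'*r) U hm
  have h3 : (5 * (m * cnt m (a'*r) U) : ℝ) ≤ 5 * (m.totient * U) + 8 * m := by exact_mod_cast h2
  have hm' : (0:ℝ) < m := by exact_mod_cast hm0
  rw [← mul_le_mul_iff_right₀ hm']
  have : (m:ℝ) * ((m.totient:ℝ) / m * U + 1.6) = m.totient * U + 1.6 * m := by field_simp
  rw [this]
  linarith

def PhiF (g V : ℕ) : ℕ := ∑ v ∈ (Finset.Ico 1 V).filter (fun v => Nat.Coprime v g), (V - v)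

lemma PhiF_succ (g V : ℕ) : PhiF g (V+1) = PhiF g V + cnt g 1 V := by
  unfold PhiF cnt
  have h1 : ∑ v ∈ (Finset.Ico 1 (V+1)).filter (fun v => Nat.Coprime v g), (V + 1 - v) =
    ∑ v ∈ (Finset.Ico 1 (V+1)).filter (fun v => Nat.Coprime v g), ((V - v) + 1) := by
    apply Finset.sum_congr rfl
    intro v hv
    simp at hv
    omega
  rw [h1, Finset.sum_add_distrib]
  congr 1
  · rw [Finset.sum_filter, Finset.sum_filter]
    rcases Nat.eq_zero_or_pos V with h | h
    · subst h; simp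
    · rw [Finset.sum_Ico_succ_top h]; simp
  · rw [Finset.sum_const, smul_eq_mul, mul_one, Nat.count_eq_card_filter_range]
    symm
    apply Finset.card_bij (fun u _ => u + 1)
    · intro u hu
      simp only [Finset.mem_filter, Finset.mem_range, Finset.mem_Ico] at hu ⊢
      exact ⟨by omega, hu.2⟩
    · intro u _ w _ h; omega
    · intro v hv
      simp only [Finset.mem_filter, Finset.mem_Ico] at hv
      exact ⟨v - 1, by simp only [Finset.mem_filter, Finset.mem_range]; rw [show v - 1 + 1 = v by omega]; exact ⟨by omega, hv.2⟩, by omega⟩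

lemma PhiF_zero (g : ℕ) : PhiF g 0 = 0 := by simp [PhiF]

set_option maxRecDepth 100000 in
lemma Phi_fin : ∀ g ∈ div30, 2 * PhiF g g ≤ Nat.count (fun u => Nat.Coprime (u+1) g) g * g ∧
    ∀ V < g, 4 * (g * PhiF g V) ≤ Nat.count (fun u => Nat.Coprime (u+1) g) g * (2 * V^2 + 13) := by
  decide +kernel

lemma Phi_bound (g V : ℕ) (hg : g ∈ div30) : 4 * (g * PhiF g V) ≤ g.totient * (2 * V^2 + 13) := by
  have hm0 : 0 < g := div30_pos g hg
  obtain ⟨h1, h2⟩ := Phi_fin g hg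
  have hper : ∀ V, 2 * PhiF g (V + g) ≤ 2 * PhiF g V + 2 * (g.totient * V) + g.totient * g := by
    intro V
    induction V with
    | zero =>
      simp only [Nat.zero_add, PhiF_zero, cnt_one_eq_totient] at *
      omega
    | succ k ih =>
      rw [show k + 1 + g = (k + g) + 1 by ring, PhiF_succ, PhiF_succ, cnt_add_period]
      have : cnt g 1 g = g.totient := cnt_one_eq_totient g
      rw [this]
      nlinarith
  rw [cnt_one_eq_totient] at h2
  induction V using Nat.strong_induction_on with
  | _ V ih =>
    by_cases hV : V < g
    · exact h2 V hV
    · obtain ⟨W, rfl⟩ : ∃ W, V = W + g := ⟨V - g, by omega⟩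
      have h3 := ih W (by omega)
      have h4 := hper W
      nlinarith [Nat.mul_le_mul_left g h4]

end

section

lemma nonrep_finite (a b : ℕ) (ha : 2 ≤ a) (hab : a < b) (h : Nat.Coprime a b) :
    {p : ℕ | p.Prime ∧ ¬ ∃ u v : ℕ, p = a * u + b * v}.Finite := by
  apply Set.Finite.subset (Set.finite_Iic (a*b - a - b))
  rintro p ⟨_, hp⟩
  have hf := frobeniusNumber_pair h (by omega) (by omega)
  apply hf.2
  intro hm
  apply hp
  rw [AddSubmonoid.mem_closure_pair] at hm
  obtain ⟨u, v, huv⟩ := hm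
  exact ⟨u, v, by rw [← huv]; simp [mul_comm]⟩

def rowc (a b V v : ℕ) : ℕ :=
  ((Finset.range ((V-v)*b/a+1)).filter (fun u => (a*u+b*v).Prime)).card

lemma decomp (a b V : ℕ) (ha : 2 ≤ a) (hab : a < b) (h : Nat.Coprime a b) :
    Nat.primeCounting (V*b) ≤ piStar a b + 2 +
      ∑ v ∈ (Finset.Ico 1 V).filter (fun v => Nat.Coprime v a), rowc a b V v := by
  classical
  have hfin := nonrep_finite a b ha hab h
  have h1 : Nat.primeCounting (V*b) = ((Finset.range (V*b+1)).filter Nat.Prime).card := by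
    rw [Nat.primeCounting, Nat.primeCounting', Nat.count_eq_card_filter_range]
  rw [h1, piStar, Set.ncard_eq_toFinset_card _ hfin]
  have hsub : (Finset.range (V*b+1)).filter Nat.Prime ⊆ (hfin.toFinset ∪ {a, V*b}) ∪
     ((Finset.Ico 1 V).filter (fun v => Nat.Coprime v a)).biUnion (fun v =>
      ((Finset.range ((V-v)*b/a+1)).filter (fun u => (a*u+b*v).Prime)).image (fun u => a*u+b*v)) := by
    intro p hp
    simp only [Finset.mem_filter, Finset.mem_range] at hp
    obtain ⟨hpN, hp⟩ := hp
    by_cases hr : ∃ u v : ℕ, p = a * u + b * v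
    · obtain ⟨u, v, rfl⟩ := hr
      rcases Nat.eq_zero_or_pos v with hv | hv
      · subst hv
        have : u = 1 := by
          have h2 : (a*u).Prime := by simpa using hp
          rcases Nat.prime_mul_iff.1 h2 with h3 | h3
          · exact h3.2
          · omega
        subst this
        simp
      · have hvV : v ≤ V := by
          by_contra hh
          have : (V+1)*b ≤ b*v := by
            rw [mul_comm]; exact Nat.mul_le_mul_left _ (by omega)
          nlinarith
        rcases hvV.lt_or_eq with hlt | heq
        · have hcop : Nat.Coprime v a := by
            by_contra hc
            have hd1 : Nat.gcd v a ∣ a*u+b*v :=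
              Nat.dvd_add ((Nat.gcd_dvd_right v a).mul_right _) ((Nat.gcd_dvd_left v a).mul_left _)
            rcases (Nat.dvd_prime hp).1 hd1 with h2 | h2
            · exact hc h2
            · have h3 : Nat.gcd v a ≤ a := Nat.gcd_le_right _ (by omega)
              have h4 : b ≤ b*v := Nat.le_mul_of_pos_right _ hv
              omega
          apply Finset.mem_union_right
          simp only [Finset.mem_biUnion, Finset.mem_filter, Finset.mem_Ico, Finset.mem_image, Finset.mem_range]
          refine ⟨v, ⟨⟨hv, hlt⟩, hcop⟩, u, ⟨?_, hp⟩, rfl⟩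
          rw [Nat.lt_succ_iff, Nat.le_div_iff_mul_le (by omega), Nat.sub_mul]
          have : b * v = v * b := mul_comm _ _
          have : a * u = u * a := mul_comm _ _
          omega
        · subst heq
          have : u = 0 := by
            rcases Nat.eq_zero_or_pos u with hu | hu
            · exact hu
            · have : 0 < a * u := by positivity
              have : b * v = v * b := mul_comm _ _
              omega
          subst this
          simp [mul_comm]
    · apply Finset.mem_union_left
      apply Finset.mem_union_left
      rw [Set.Finite.mem_toFinset]
      exact ⟨hp, hr⟩
  refine (Finset.card_le_card hsub).trans ?_
  refine (Finset.card_union_le _ _).trans ?_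
  gcongr
  · refine (Finset.card_union_le _ _).trans ?_
    gcongr
    exact Finset.card_le_two
  · refine Finset.card_biUnion_le.trans ?_
    apply Finset.sum_le_sum
    intro v _
    exact Finset.card_image_le

lemma decomp_real (a b V : ℕ) (κ δ : ℝ) (ha : 2 ≤ a) (hab : a < b) (h : Nat.Coprime a b) (hV : 1 ≤ V)
    (hκ : 0 ≤ κ) (hδ : 0 ≤ δ)
    (hrow : ∀ v U, 1 ≤ v → Nat.Coprime v a →
      (((Finset.range U).filter (fun u => (a*u+b*v).Prime)).card : ℝ) ≤ κ * U + δ) :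
    (Nat.primeCounting (V*b) : ℝ) ≤ piStar a b + 2 + κ * ((b:ℝ)/a) * PhiF a V + (κ + δ) * ((V:ℝ) - 1) := by
  have h1 := decomp a b V ha hab h
  have h1' : (Nat.primeCounting (V*b) : ℝ) ≤ piStar a b + 2 +
      ∑ v ∈ (Finset.Ico 1 V).filter (fun v => Nat.Coprime v a), (rowc a b V v : ℝ) := by exact_mod_cast h1
  have ha' : (0:ℝ) < a := by positivity
  have h2 : ∑ v ∈ (Finset.Ico 1 V).filter (fun v => Nat.Coprime v a), (rowc a b V v : ℝ) ≤
     ∑ v ∈ (Finset.Ico 1 V).filter (fun v => Nat.Coprime v a), (κ * ((b:ℝ)/a) * ((V - v : ℕ):ℝ) + (κ+δ)) := by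
    apply Finset.sum_le_sum
    intro v hv
    simp only [Finset.mem_filter, Finset.mem_Ico] at hv
    refine (hrow v _ hv.1.1 hv.2).trans ?_
    have h3 : (((V-v)*b/a : ℕ):ℝ) ≤ ((V-v:ℕ):ℝ) * b / a := by
      have := Nat.cast_div_le (α := ℝ) (m := (V-v)*b) (n := a)
      push_cast at this ⊢
      exact this
    calc κ * (((V-v)*b/a + 1 : ℕ):ℝ) + δ ≤ κ * (((V-v:ℕ):ℝ) * b / a + 1) + δ := by
          push_cast
          gcongr
      _ = _ := by ring
  rw [Finset.sum_add_distrib, ← Finset.mul_sum, Finset.sum_const, nsmul_eq_mul] at h2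
  have h3 : ∑ v ∈ (Finset.Ico 1 V).filter (fun v => Nat.Coprime v a), ((V - v : ℕ):ℝ) = PhiF a V := by
    unfold PhiF; push_cast; rfl
  rw [h3] at h2
  have h4 : (((Finset.Ico 1 V).filter (fun v => Nat.Coprime v a)).card : ℝ) * (κ+δ) ≤ (κ+δ) * ((V:ℝ)-1) := by
    rw [mul_comm]
    gcongr
    have : ((Finset.Ico 1 V).filter (fun v => Nat.Coprime v a)).card ≤ V - 1 :=
      (Finset.card_filter_le _ _).trans (by simp)
    have : ((Finset.Ico 1 V).filter (fun v => Nat.Coprime v a)).card + 1 ≤ V := by omega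
    have : ((((Finset.Ico 1 V).filter (fun v => Nat.Coprime v a)).card + 1 : ℕ):ℝ) ≤ V := by exact_mod_cast this
    push_cast at this
    linarith
  linarith

end

section
open Finset

def DD (a Q : ℕ) : Finset ℕ := (Icc 1 Q).filter (fun d => Squarefree d ∧ Nat.Coprime d a)

noncomputable def GG (a Q : ℕ) : ℝ := ∑ d ∈ DD a Q, 1 / (Nat.totient d : ℝ)

noncomputable def xx (a Q d : ℕ) : ℝ :=
  (ArithmeticFunction.moebius d : ℝ) / GG a Q * ∑ k ∈ (DD a Q).filter (fun k => d ∣ k), 1 / (Nat.totient k : ℝ)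

lemma mem_DD {a Q d : ℕ} : d ∈ DD a Q ↔ (1 ≤ d ∧ d ≤ Q) ∧ Squarefree d ∧ Nat.Coprime d a := by
  simp [DD]

lemma DD_dvd {a Q d e : ℕ} (hd : d ∈ DD a Q) (he : e ∣ d) : e ∈ DD a Q := by
  rw [mem_DD] at *
  have h1 : 0 < d := hd.1.1
  refine ⟨⟨Nat.pos_of_dvd_of_pos he h1, (Nat.le_of_dvd h1 he).trans hd.1.2⟩, hd.2.1.squarefree_of_dvd he, hd.2.2.coprime_dvd_left he⟩

lemma one_mem_DD {a Q : ℕ} (hQ : 1 ≤ Q) : 1 ∈ DD a Q := by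
  rw [mem_DD]; exact ⟨⟨le_rfl, hQ⟩, squarefree_one, Nat.coprime_one_left a⟩

lemma tot_pos {a Q d : ℕ} (hd : d ∈ DD a Q) : (0:ℝ) < Nat.totient d := by
  rw [mem_DD] at hd
  exact_mod_cast Nat.totient_pos.2 hd.1.1

lemma GG_ge_one {a Q : ℕ} (hQ : 1 ≤ Q) : 1 ≤ GG a Q := by
  unfold GG
  have : (1:ℝ) = 1 / (Nat.totient 1 : ℝ) := by simp
  conv_lhs => rw [this]
  exact Finset.single_le_sum (f := fun d => 1 / (Nat.totient d : ℝ)) (fun i hi => by positivity) (one_mem_DD hQ)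

lemma moebius_sum (k l : ℕ) (hk : Squarefree k) (hl : l ∣ k) :
    ∑ d ∈ k.divisors.filter (fun d => l ∣ d), (ArithmeticFunction.moebius d : ℝ) =
      if k = l then (ArithmeticFunction.moebius l : ℝ) else 0 := by
  obtain ⟨m, rfl⟩ := hl
  have hk0 : l * m ≠ 0 := hk.ne_zero
  have hl0 : l ≠ 0 := fun h => hk0 (by simp [h])
  have hcop : Nat.Coprime l m := Nat.coprime_of_squarefree_mul hk
  have h1 : ∑ d ∈ (l*m).divisors.filter (fun d => l ∣ d), (ArithmeticFunction.moebius d : ℝ) =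
     ∑ e ∈ m.divisors, (ArithmeticFunction.moebius (l*e) : ℝ) := by
    symm
    apply Finset.sum_bij (fun e _ => l * e)
    · intro e he
      simp only [Nat.mem_divisors, mem_filter] at *
      exact ⟨⟨Nat.mul_dvd_mul_left _ he.1, hk0⟩, dvd_mul_right _ _⟩
    · intro e _ e' _ h
      exact Nat.eq_of_mul_eq_mul_left (Nat.pos_of_ne_zero hl0) h
    · intro d hd
      simp only [Nat.mem_divisors, mem_filter] at hd
      obtain ⟨e, rfl⟩ := hd.2
      refine ⟨e, ?_, rfl⟩
      simp only [Nat.mem_divisors]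
      exact ⟨Nat.dvd_of_mul_dvd_mul_left (Nat.pos_of_ne_zero hl0) hd.1.1, fun h => hk0 (by simp [h])⟩
    · intros; rfl
  rw [h1]
  have h2 : ∀ e ∈ m.divisors, (ArithmeticFunction.moebius (l*e) : ℝ) = (ArithmeticFunction.moebius l : ℝ) * (ArithmeticFunction.moebius e : ℝ) := by
    intro e he
    rw [ArithmeticFunction.isMultiplicative_moebius.map_mul_of_coprime (hcop.coprime_dvd_right (Nat.dvd_of_mem_divisors he))]
    push_cast; rfl
  rw [Finset.sum_congr rfl h2, ← Finset.mul_sum]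
  have h3 : ∑ e ∈ m.divisors, (ArithmeticFunction.moebius e : ℝ) = if m = 1 then 1 else 0 := by
    have h := congrArg (fun f => f m) (ArithmeticFunction.coe_moebius_mul_coe_zeta (R := ℝ))
    simp only [ArithmeticFunction.coe_mul_zeta_apply, ArithmeticFunction.one_apply, ArithmeticFunction.intCoe_apply] at h
    exact h
  rw [h3]
  by_cases hm : m = 1
  · simp [hm]
  · have : l * m ≠ l := by
      intro h
      apply hm
      exact Nat.eq_of_mul_eq_mul_left (Nat.pos_of_ne_zero hl0) (by omega)
    rw [if_neg hm, if_neg this, mul_zero]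

lemma yy_eq {a Q l : ℕ} (hl : l ∈ DD a Q) :
    ∑ d ∈ (DD a Q).filter (fun d => l ∣ d), xx a Q d = (ArithmeticFunction.moebius l : ℝ) / GG a Q / (Nat.totient l : ℝ) := by
  unfold xx
  have h1 : ∀ d ∈ (DD a Q).filter (fun d => l ∣ d), (ArithmeticFunction.moebius d : ℝ) / GG a Q * ∑ k ∈ (DD a Q).filter (fun k => d ∣ k), 1 / (Nat.totient k : ℝ)
     = ∑ k ∈ DD a Q, (if d ∣ k then (ArithmeticFunction.moebius d : ℝ) else 0) * (1 / GG a Q * (1 / (Nat.totient k : ℝ))) := by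
    intro d _
    rw [Finset.sum_filter, Finset.mul_sum]
    apply Finset.sum_congr rfl
    intro k _
    split_ifs <;> ring
  rw [Finset.sum_congr rfl h1, Finset.sum_comm]
  have h2 : ∀ k ∈ DD a Q, ∑ d ∈ (DD a Q).filter (fun d => l ∣ d), (if d ∣ k then (ArithmeticFunction.moebius d : ℝ) else 0) * (1 / GG a Q * (1 / (Nat.totient k : ℝ)))
    = if k = l then (ArithmeticFunction.moebius l : ℝ) * (1 / GG a Q * (1 / (Nat.totient k : ℝ))) else 0 := by
    intro k hk
    rw [← Finset.sum_mul]
    have h3 : ∑ d ∈ (DD a Q).filter (fun d => l ∣ d), (if d ∣ k then (ArithmeticFunction.moebius d : ℝ) else 0) =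
       ∑ d ∈ k.divisors.filter (fun d => l ∣ d), (ArithmeticFunction.moebius d : ℝ) := by
      rw [← Finset.sum_filter]
      apply Finset.sum_congr _ (fun _ _ => rfl)
      ext d
      simp only [mem_filter, Nat.mem_divisors]
      constructor
      · rintro ⟨⟨_, h2⟩, h3⟩
        exact ⟨⟨h3, by have := (mem_DD.1 hk).1.1; omega⟩, h2⟩
      · rintro ⟨⟨h3, _⟩, h2⟩
        exact ⟨⟨DD_dvd hk h3, h2⟩, h3⟩
    rw [h3]
    by_cases hlk : l ∣ k
    · rw [moebius_sum k l (mem_DD.1 hk).2.1 hlk]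
      split_ifs <;> simp
    · have hne : k ≠ l := fun h => hlk (by rw [h])
      rw [if_neg hne]
      have : k.divisors.filter (fun d => l ∣ d) = ∅ := by
        apply Finset.filter_eq_empty_iff.2
        intro d hd hld
        exact hlk (hld.trans (Nat.dvd_of_mem_divisors hd))
      rw [this]; simp
  rw [Finset.sum_congr rfl h2, Finset.sum_ite_eq' , if_pos hl]
  ring

lemma gcd_sum {a Q d e : ℕ} (hd : d ∈ DD a Q) (_he : e ∈ DD a Q) :
    (Nat.gcd d e : ℝ) = ∑ l ∈ DD a Q, if l ∣ d ∧ l ∣ e then (Nat.totient l : ℝ) else 0 := by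
  have h := Nat.sum_totient (Nat.gcd d e)
  have h' : (Nat.gcd d e : ℝ) = ∑ l ∈ (Nat.gcd d e).divisors, (Nat.totient l : ℝ) := by exact_mod_cast h.symm
  rw [h', ← Finset.sum_filter]
  apply Finset.sum_congr _ (fun _ _ => rfl)
  ext l
  have hd0 : 0 < d := (mem_DD.1 hd).1.1
  simp only [mem_filter, Nat.mem_divisors, Nat.dvd_gcd_iff]
  constructor
  · rintro ⟨h, _⟩
    exact ⟨DD_dvd hd h.1, h⟩
  · rintro ⟨_, h⟩
    exact ⟨h, (Nat.gcd_pos_of_pos_left _ hd0).ne'⟩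

lemma quad_eq {a Q : ℕ} (hQ : 1 ≤ Q) :
    ∑ d ∈ DD a Q, ∑ e ∈ DD a Q, xx a Q d * xx a Q e * (Nat.gcd d e : ℝ) = 1 / GG a Q := by
  have h1 : ∑ d ∈ DD a Q, ∑ e ∈ DD a Q, xx a Q d * xx a Q e * (Nat.gcd d e : ℝ) =
      ∑ d ∈ DD a Q, ∑ e ∈ DD a Q, ∑ l ∈ DD a Q, (Nat.totient l : ℝ) * ((if l ∣ d then xx a Q d else 0) * (if l ∣ e then xx a Q e else 0)) := by
    apply Finset.sum_congr rfl; intro d hd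
    apply Finset.sum_congr rfl; intro e he
    rw [gcd_sum hd he, Finset.mul_sum]
    apply Finset.sum_congr rfl; intro l _
    by_cases h1 : l ∣ d <;> by_cases h2 : l ∣ e <;> simp [h1, h2]; ring
  rw [h1]
  have h2 : ∑ d ∈ DD a Q, ∑ e ∈ DD a Q, ∑ l ∈ DD a Q, (Nat.totient l : ℝ) * ((if l ∣ d then xx a Q d else 0) * (if l ∣ e then xx a Q e else 0))
    = ∑ l ∈ DD a Q, (Nat.totient l : ℝ) * (∑ d ∈ (DD a Q).filter (fun d => l ∣ d), xx a Q d)^2 := by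
    have : ∀ d ∈ DD a Q, ∑ e ∈ DD a Q, ∑ l ∈ DD a Q, (Nat.totient l : ℝ) * ((if l ∣ d then xx a Q d else 0) * (if l ∣ e then xx a Q e else 0))
      = ∑ l ∈ DD a Q, ∑ e ∈ DD a Q, (Nat.totient l : ℝ) * ((if l ∣ d then xx a Q d else 0) * (if l ∣ e then xx a Q e else 0)) :=
      fun d _ => Finset.sum_comm
    rw [Finset.sum_congr rfl this, Finset.sum_comm]
    apply Finset.sum_congr rfl; intro l _
    rw [sq, Finset.sum_filter, Finset.sum_mul_sum, Finset.mul_sum]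
    apply Finset.sum_congr rfl; intro d _
    rw [Finset.mul_sum]
  rw [h2]
  have hG := GG_ge_one (a := a) hQ
  have h3 : ∀ l ∈ DD a Q, (Nat.totient l : ℝ) * (∑ d ∈ (DD a Q).filter (fun d => l ∣ d), xx a Q d)^2 = 1 / GG a Q ^ 2 * (1 / (Nat.totient l : ℝ)) := by
    intro l hl
    rw [yy_eq hl]
    have hp := tot_pos hl
    have hm : (ArithmeticFunction.moebius l : ℝ)^2 = 1 := by
      exact_mod_cast ArithmeticFunction.moebius_sq_eq_one_of_squarefree (mem_DD.1 hl).2.1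
    have hG0 : GG a Q ≠ 0 := by linarith
    field_simp
    linarith
  rw [Finset.sum_congr rfl h3, ← Finset.mul_sum]
  change 1 / GG a Q ^ 2 * GG a Q = _
  have hG0 : GG a Q ≠ 0 := by linarith
  field_simp

lemma xx_one {a Q : ℕ} (hQ : 1 ≤ Q) : xx a Q 1 = 1 := by
  unfold xx
  have hG := GG_ge_one (a := a) hQ
  have : (DD a Q).filter (fun k => 1 ∣ k) = DD a Q := by simp
  rw [this]
  change _ / _ * GG a Q = 1
  have hG0 : GG a Q ≠ 0 := by linarith
  simp [hG0]

lemma lam_aux {a Q d : ℕ} (hd : d ∈ DD a Q) :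
    (d:ℝ) * ∑ k ∈ (DD a Q).filter (fun k => d ∣ k), 1 / (Nat.totient k : ℝ) ≤ GG a Q := by
  have hd0 : 0 < d := (mem_DD.1 hd).1.1
  have h' : (d : ℝ) = ∑ e ∈ d.divisors, (Nat.totient e : ℝ) := by exact_mod_cast (Nat.sum_totient d).symm
  rw [h', Finset.sum_mul_sum, ← Finset.sum_product']
  have h1 : ∀ x ∈ d.divisors ×ˢ (DD a Q).filter (fun k => d ∣ k),
      (Nat.totient x.1 : ℝ) * (1 / (Nat.totient x.2 : ℝ)) = 1 / (Nat.totient (x.2 / x.1) : ℝ) := by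
    rintro ⟨e, k⟩ hx
    simp only [mem_product, Nat.mem_divisors, mem_filter] at hx ⊢
    obtain ⟨⟨hed, _⟩, hk, hdk⟩ := hx
    obtain ⟨m, rfl⟩ := hed.trans hdk
    have hsq := (mem_DD.1 hk).2.1
    have he0 : 0 < e := Nat.pos_of_dvd_of_pos hed hd0
    rw [Nat.mul_div_cancel_left _ he0, Nat.totient_mul (Nat.coprime_of_squarefree_mul hsq)]
    have := tot_pos (DD_dvd hk (dvd_mul_right e m))
    have := tot_pos (DD_dvd hk (dvd_mul_left m e))
    push_cast
    field_simp
  rw [Finset.sum_congr rfl h1]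
  have hinj : Set.InjOn (fun x : ℕ × ℕ => x.2 / x.1) (d.divisors ×ˢ (DD a Q).filter (fun k => d ∣ k) : Finset (ℕ × ℕ)) := by
    have key : ∀ e k, e ∣ d → d ∣ k → Squarefree k → Nat.gcd (k/e) d * e = d := by
      intro e k he hk hsq
      obtain ⟨f, rfl⟩ := he
      obtain ⟨m, rfl⟩ := hk
      have he0 : 0 < e := Nat.pos_of_ne_zero (fun h => hsq.ne_zero (by simp [h]))
      have hcop : Nat.Coprime (e*f) m := Nat.coprime_of_squarefree_mul hsq
      have hcop2 : Nat.Coprime e f := Nat.coprime_of_squarefree_mul (hsq.squarefree_of_dvd (dvd_mul_right _ _))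
      rw [mul_assoc, Nat.mul_div_cancel_left _ he0, mul_comm e f, Nat.gcd_mul_left]
      have : Nat.gcd m e = 1 := (Nat.Coprime.coprime_mul_right hcop).symm
      rw [this]; ring
    rintro ⟨e, k⟩ hx ⟨e', k'⟩ hx' heq
    simp only [Finset.coe_product, Set.mem_prod, Finset.mem_coe, Nat.mem_divisors, mem_filter] at hx hx' heq
    obtain ⟨⟨hed, _⟩, hk, hdk⟩ := hx
    obtain ⟨⟨hed', _⟩, hk', hdk'⟩ := hx'
    have k1 := key e k hed hdk (mem_DD.1 hk).2.1
    have k2 := key e' k' hed' hdk' (mem_DD.1 hk').2.1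
    rw [heq] at k1
    have hg : 0 < Nat.gcd (k'/e') d := Nat.gcd_pos_of_pos_right _ hd0
    have hee : e = e' := Nat.eq_of_mul_eq_mul_left hg (k1.trans k2.symm)
    subst hee
    have : k = k' := by
      rw [← Nat.div_mul_cancel (hed.trans hdk), heq, Nat.div_mul_cancel (hed.trans hdk')]
    rw [this]
  rw [← Finset.sum_image (f := fun n => 1 / (Nat.totient n : ℝ)) hinj]
  unfold GG
  apply Finset.sum_le_sum_of_subset_of_nonneg
  · intro n hn
    simp only [mem_image, mem_product, Nat.mem_divisors, mem_filter, Prod.exists] at hn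
    obtain ⟨e, k, ⟨⟨hed, _⟩, hk, hdk⟩, rfl⟩ := hn
    exact DD_dvd hk (Nat.div_dvd_of_dvd (hed.trans hdk))
  · intros; positivity

lemma lam_le {a Q d : ℕ} (hQ : 1 ≤ Q) (hd : d ∈ DD a Q) : |xx a Q d * d| ≤ 1 := by
  have h := lam_aux hd
  have hG := GG_ge_one (a := a) hQ
  unfold xx
  have hs : 0 ≤ ∑ k ∈ (DD a Q).filter (fun k => d ∣ k), 1 / (Nat.totient k : ℝ) :=
    Finset.sum_nonneg (fun i _ => by positivity)
  rw [abs_mul, abs_mul, abs_div, abs_of_nonneg hs, abs_of_nonneg (show 0 ≤ GG a Q by linarith), abs_of_nonneg (show (0:ℝ) ≤ d by positivity)]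
  have hm : |(ArithmeticFunction.moebius d : ℝ)| = 1 := by
    exact_mod_cast ArithmeticFunction.abs_moebius_eq_one_of_squarefree (mem_DD.1 hd).2.1
  rw [hm]
  have : 1 / GG a Q * (∑ k ∈ (DD a Q).filter (fun k => d ∣ k), 1 / (Nat.totient k : ℝ)) * d =
    (d * ∑ k ∈ (DD a Q).filter (fun k => d ∣ k), 1 / (Nat.totient k : ℝ)) / GG a Q := by ring
  rw [this, div_le_one (by linarith)]
  exact h

end

section
open Finset

lemma count_dvd (a r U k : ℕ) (hk : 0 < k) (hc : Nat.Coprime a k) :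
    |((((range U).filter (fun u => k ∣ a*u+r)).card : ℝ)) - (U:ℝ)/k| ≤ 1 := by
  obtain ⟨v, hv⟩ : ∃ v, k ∣ a * v + r := by
    obtain ⟨x, hx⟩ : ∃ a', a * a' ≡ 1 [MOD k] := by
      rcases Nat.lt_or_ge 1 k with h | h
      · obtain ⟨x, hx⟩ := Nat.exists_mul_mod_eq_one_of_coprime hc h
        exact ⟨x, by rw [Nat.ModEq, hx.2, Nat.mod_eq_of_lt h]⟩
      · have : k = 1 := by omega
        subst this
        exact ⟨0, Nat.modEq_one⟩
    refine ⟨x * ((k-1) * r), ?_⟩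
    have h1 : a * (x * ((k-1)*r)) + r ≡ 1 * ((k-1)*r) + r [MOD k] := by
      apply Nat.ModEq.add_right
      rw [← mul_assoc]
      exact hx.mul_right _
    have h2 : 1 * ((k-1)*r) + r = k * r := by
      obtain ⟨j, rfl⟩ : ∃ j, k = j + 1 := ⟨k-1, by omega⟩
      simp; ring
    rw [h2] at h1
    exact (Nat.modEq_zero_iff_dvd).1 (h1.trans (Nat.modEq_zero_iff_dvd.2 (dvd_mul_right _ _)))
  have h1 : ((range U).filter (fun u => k ∣ a*u+r)).card = U.count (· ≡ v [MOD k]) := by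
    rw [Nat.count_eq_card_filter_range]
    congr 1
    apply Finset.filter_congr
    intro u _
    constructor
    · intro h
      have h3 : a * u + r ≡ a * v + r [MOD k] :=
        (Nat.modEq_zero_iff_dvd.2 h).trans (Nat.modEq_zero_iff_dvd.2 hv).symm
      have h4 := Nat.ModEq.add_right_cancel' r h3
      exact Nat.ModEq.cancel_left_of_coprime (by rw [Nat.gcd_comm]; exact hc) h4
    · intro h
      have h3 : a * u + r ≡ a * v + r [MOD k] := (h.mul_left a).add_right r
      exact (Nat.modEq_zero_iff_dvd).1 (h3.trans (Nat.modEq_zero_iff_dvd.2 hv))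
  rw [h1, Nat.count_modEq_card _ hk]
  have hk' : (0:ℝ) < k := by exact_mod_cast hk
  have h2 : ((U/k : ℕ):ℝ) ≤ (U:ℝ)/k := Nat.cast_div_le
  have h3 : (U:ℝ)/k ≤ ((U/k : ℕ):ℝ) + 1 := by
    rw [div_le_iff₀ hk']
    have : U ≤ (U/k+1)*k := by
      have := Nat.div_add_mod U k
      have h2 := Nat.mod_lt U hk
      nlinarith
    exact_mod_cast this
  rw [abs_le]
  split_ifs <;> push_cast <;> constructor <;> linarith

lemma selberg_count (a r U Q : ℕ) (hQ : 1 ≤ Q) :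
    (((range U).filter (fun u => (a*u+r).Prime ∧ Q < a*u+r)).card : ℝ) ≤ U / GG a Q + (Q:ℝ)^2 := by
  set lam : ℕ → ℝ := fun d => xx a Q d * d with hlam
  have hl1 : lam 1 = 1 := by simp [hlam, xx_one hQ]
  have step1 : (((range U).filter (fun u => (a*u+r).Prime ∧ Q < a*u+r)).card : ℝ) ≤
      ∑ u ∈ range U, (∑ d ∈ DD a Q, if d ∣ a*u+r then lam d else 0)^2 := by
    rw [Finset.card_eq_sum_ones, Finset.sum_filter]
    push_cast
    apply Finset.sum_le_sum
    intro u _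
    split_ifs with h
    · have : ∑ d ∈ DD a Q, (if d ∣ a*u+r then lam d else 0) = 1 := by
        rw [Finset.sum_eq_single 1]
        · simp [hl1]
        · intro d hd hd1
          rw [if_neg]
          intro hdv
          rcases (Nat.dvd_prime h.1).1 hdv with h2 | h2
          · exact hd1 h2
          · have := (mem_DD.1 hd).1.2; omega
        · intro h; exact absurd (one_mem_DD hQ) h
      rw [this]; norm_num
    · positivity
  have step2 : ∑ u ∈ range U, (∑ d ∈ DD a Q, if d ∣ a*u+r then lam d else 0)^2 =
      ∑ d ∈ DD a Q, ∑ e ∈ DD a Q, lam d * lam e * (((range U).filter (fun u => Nat.lcm d e ∣ a*u+r)).card : ℝ) := by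
    have : ∀ u ∈ range U, (∑ d ∈ DD a Q, if d ∣ a*u+r then lam d else 0)^2 =
       ∑ d ∈ DD a Q, ∑ e ∈ DD a Q, (if Nat.lcm d e ∣ a*u+r then lam d * lam e else 0) := by
      intro u _
      rw [sq, Finset.sum_mul_sum]
      apply Finset.sum_congr rfl; intro d _
      apply Finset.sum_congr rfl; intro e _
      by_cases h1 : d ∣ a*u+r <;> by_cases h2 : e ∣ a*u+r <;> simp [h1, h2, Nat.lcm_dvd_iff]
    rw [Finset.sum_congr rfl this, Finset.sum_comm]
    apply Finset.sum_congr rfl; intro d _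
    rw [Finset.sum_comm]
    apply Finset.sum_congr rfl; intro e _
    rw [← Finset.sum_filter, Finset.sum_const, nsmul_eq_mul, mul_comm]
  have step3 : ∑ d ∈ DD a Q, ∑ e ∈ DD a Q, lam d * lam e * (((range U).filter (fun u => Nat.lcm d e ∣ a*u+r)).card : ℝ)
     ≤ ∑ d ∈ DD a Q, ∑ e ∈ DD a Q, ((U:ℝ) * (xx a Q d * xx a Q e * (Nat.gcd d e : ℝ)) + 1) := by
    apply Finset.sum_le_sum; intro d hd
    apply Finset.sum_le_sum; intro e he
    have hd0 : 0 < d := (mem_DD.1 hd).1.1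
    have he0 : 0 < e := (mem_DD.1 he).1.1
    have hcop : Nat.Coprime a (Nat.lcm d e) := by
      have h1 := (mem_DD.1 hd).2.2
      have h2 := (mem_DD.1 he).2.2
      have := (Nat.Coprime.mul_left h1 h2).symm
      exact this.coprime_dvd_right (Nat.lcm_dvd_mul d e)
    have hc := count_dvd a r U (Nat.lcm d e) (Nat.lcm_pos hd0 he0) hcop
    have ha1 := lam_le hQ hd
    have ha2 := lam_le hQ he
    have hgl : (Nat.gcd d e : ℝ) * (Nat.lcm d e : ℝ) = d * e := by exact_mod_cast Nat.gcd_mul_lcm d e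
    have hl0 : (0:ℝ) < Nat.lcm d e := by exact_mod_cast Nat.lcm_pos hd0 he0
    have h3 : lam d * lam e * ((U:ℝ) / (Nat.lcm d e : ℝ)) = (U:ℝ) * (xx a Q d * xx a Q e * (Nat.gcd d e : ℝ)) := by
      simp only [hlam]
      rw [mul_div_assoc', div_eq_iff hl0.ne']
      linear_combination (-(xx a Q d * xx a Q e * U)) * hgl
    rw [← h3]
    have h4 : lam d * lam e * ((((range U).filter (fun u => Nat.lcm d e ∣ a*u+r)).card : ℝ) - (U:ℝ) / (Nat.lcm d e : ℝ)) ≤ 1 := by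
      refine (le_abs_self _).trans ?_
      rw [abs_mul, abs_mul]
      have h5 : |lam d| * |lam e| ≤ 1 := mul_le_one₀ ha1 (abs_nonneg _) ha2
      exact mul_le_one₀ h5 (abs_nonneg _) hc
    linarith
  have step4 : ∑ d ∈ DD a Q, ∑ e ∈ DD a Q, ((U:ℝ) * (xx a Q d * xx a Q e * (Nat.gcd d e : ℝ)) + 1) ≤ U / GG a Q + (Q:ℝ)^2 := by
    have hcard : ((DD a Q).card : ℝ) ≤ Q := by
      have : (DD a Q).card ≤ Q := (Finset.card_filter_le _ _).trans (by simp)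
      exact_mod_cast this
    have h5 : ∑ d ∈ DD a Q, ∑ e ∈ DD a Q, ((U:ℝ) * (xx a Q d * xx a Q e * (Nat.gcd d e : ℝ)) + 1) =
       (U:ℝ) * (∑ d ∈ DD a Q, ∑ e ∈ DD a Q, xx a Q d * xx a Q e * (Nat.gcd d e : ℝ)) + ((DD a Q).card : ℝ)^2 := by
      simp only [Finset.sum_add_distrib, Finset.mul_sum, Finset.sum_const, nsmul_eq_mul, mul_one]
      ring
    rw [h5, quad_eq hQ]
    have : ((DD a Q).card : ℝ)^2 ≤ (Q:ℝ)^2 := by gcongr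
    have h6 : (U:ℝ) * (1 / GG a Q) = U / GG a Q := by ring
    linarith
  linarith

/-- the squarefree part coprime to a -/
def kk (a n : ℕ) : ℕ := ∏ p ∈ n.primeFactors.filter (fun p => ¬ p ∣ a), p

lemma kk_dvd (a n : ℕ) : kk a n ∣ n := by
  unfold kk
  exact (Finset.prod_dvd_prod_of_subset _ _ _ (Finset.filter_subset _ _)).trans (Nat.prod_primeFactors_dvd n)

lemma kk_primeFactors (a n : ℕ) : (kk a n).primeFactors = n.primeFactors.filter (fun p => ¬ p ∣ a) := by
  unfold kk
  apply Nat.primeFactors_prod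
  intro p hp
  exact Nat.prime_of_mem_primeFactors (Finset.mem_filter.1 hp).1

lemma kk_mem {a Q n : ℕ} (hn : 1 ≤ n) (hnQ : n ≤ Q) : kk a n ∈ DD a Q := by
  have hpos : 0 < kk a n := Nat.pos_of_dvd_of_pos (kk_dvd a n) hn
  rw [mem_DD]
  refine ⟨⟨hpos, (Nat.le_of_dvd hn (kk_dvd a n)).trans hnQ⟩, ?_, ?_⟩
  · unfold kk
    refine Finset.squarefree_prod_of_pairwise_isCoprime (fun p hp q hq hpq ↦ ?_)
      fun p hp ↦ (Nat.prime_of_mem_primeFactors (mem_filter.1 hp).1).squarefree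
    simp only [← Nat.coprime_iff_isRelPrime]
    exact (Nat.coprime_primes (Nat.prime_of_mem_primeFactors (mem_filter.1 hp).1)
      (Nat.prime_of_mem_primeFactors (mem_filter.1 hq).1)).mpr hpq
  · unfold kk
    apply Nat.Coprime.prod_left
    intro p hp
    rw [mem_filter] at hp
    exact (Nat.Prime.coprime_iff_not_dvd (Nat.prime_of_mem_primeFactors hp.1)).2 hp.2


noncomputable def invHom : ℕ →* ℝ where
  toFun n := (n:ℝ)⁻¹
  map_one' := by simp
  map_mul' x y := by push_cast; rw [mul_inv]

lemma sum_factored_le (t : Finset ℕ) (n : ℕ) (hn : 0 < n) (ht : ∀ m ∈ t, m ∈ Nat.factoredNumbers n.primeFactors) :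
    ∑ m ∈ t, (m:ℝ)⁻¹ ≤ (n:ℝ) / Nat.totient n := by
  have h := EulerProduct.summable_and_hasSum_factoredNumbers_prod_filter_prime_geometric (f := invHom)
    (fun {p} hp => by
      simp only [invHom, MonoidHom.coe_mk, OneHom.coe_mk, norm_inv, Real.norm_natCast]
      exact inv_lt_one_of_one_lt₀ (by exact_mod_cast hp.one_lt)) n.primeFactors
  have hs := h.2
  have h1 : ∏ p ∈ n.primeFactors with p.Prime, (1 - invHom p)⁻¹ = (n:ℝ) / Nat.totient n := by
    have : n.primeFactors.filter Nat.Prime = n.primeFactors := by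
      apply Finset.filter_true_of_mem
      intro p hp
      exact Nat.prime_of_mem_primeFactors hp
    rw [this, Finset.prod_inv_distrib]
    have h2 := Nat.totient_eq_mul_prod_factors n
    have h3 : (Nat.totient n : ℝ) = n * ∏ p ∈ n.primeFactors, (1 - (p : ℝ)⁻¹) := by
      have h2' : ((Nat.totient n : ℚ) : ℝ) = ((n * ∏ p ∈ n.primeFactors, (1 - (p : ℚ)⁻¹) : ℚ) : ℝ) := by rw [h2]
      push_cast at h2'
      exact h2'
    have h4 : ∏ p ∈ n.primeFactors, (1 - invHom p) = ∏ p ∈ n.primeFactors, (1 - (p : ℝ)⁻¹) := rfl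
    rw [h4, h3]
    have : (n:ℝ) ≠ 0 := by positivity
    have hP : ∏ p ∈ n.primeFactors, (1 - (p : ℝ)⁻¹) ≠ 0 := by
      intro h0
      rw [h0, mul_zero] at h3
      have : (0:ℝ) < Nat.totient n := by exact_mod_cast Nat.totient_pos.2 hn
      linarith
    field_simp
  rw [h1] at hs
  have h5 := sum_le_hasSum (t.subtype (· ∈ Nat.factoredNumbers n.primeFactors)) (fun i _ => by
    simp only [invHom, MonoidHom.coe_mk, OneHom.coe_mk]; positivity) hs
  refine le_trans (le_of_eq ?_) h5
  rw [Finset.sum_subtype_of_mem (f := fun m => invHom m) ht]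
  rfl

lemma GG_lower (a Q : ℕ) (ha : 1 ≤ a) : Real.log (Q+1) ≤ (a:ℝ) / Nat.totient a * GG a Q := by
  have h0 : Real.log (Q+1) ≤ ∑ n ∈ Icc 1 Q, (n:ℝ)⁻¹ := by
    have := log_add_one_le_harmonic Q
    rw [harmonic_eq_sum_Icc] at this
    push_cast at this
    exact this
  refine h0.trans ?_
  have h1 : ∑ n ∈ Icc 1 Q, (n:ℝ)⁻¹ = ∑ k ∈ DD a Q, ∑ n ∈ (Icc 1 Q).filter (fun n => kk a n = k), (n:ℝ)⁻¹ := by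
    symm
    apply Finset.sum_fiberwise_of_maps_to
    intro n hn
    rw [mem_Icc] at hn
    exact kk_mem hn.1 hn.2
  rw [h1]
  unfold GG
  rw [Finset.mul_sum]
  apply Finset.sum_le_sum
  intro k hk
  have hk' := mem_DD.1 hk
  have hk0 : 0 < k := hk'.1.1
  have h2 : ∑ n ∈ (Icc 1 Q).filter (fun n => kk a n = k), (n:ℝ)⁻¹ =
    (k:ℝ)⁻¹ * ∑ m ∈ ((Icc 1 Q).filter (fun n => kk a n = k)).image (fun n => n / k), (m:ℝ)⁻¹ := by
    have hdv : ∀ n ∈ (Icc 1 Q).filter (fun n => kk a n = k), k ∣ n := by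
      intro n hn
      rw [mem_filter] at hn
      rw [← hn.2]; exact kk_dvd a n
    rw [Finset.sum_image]
    · rw [Finset.mul_sum]
      apply Finset.sum_congr rfl
      intro n hn
      obtain ⟨m, rfl⟩ := hdv n hn
      rw [Nat.mul_div_cancel_left _ hk0]
      push_cast
      rw [mul_inv]
    · intro n hn n' hn' h
      have e1 := Nat.div_mul_cancel (hdv n hn)
      have e2 := Nat.div_mul_cancel (hdv n' hn')
      simp only at h
      rw [← e1, ← e2, h]
  rw [h2]
  have h3 := sum_factored_le (((Icc 1 Q).filter (fun n => kk a n = k)).image (fun n => n / k)) (k * a) (by positivity) (by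
    intro m hm
    simp only [mem_image, mem_filter, mem_Icc] at hm
    obtain ⟨n, ⟨hn, hkn⟩, rfl⟩ := hm
    have hdv : k ∣ n := by rw [← hkn]; exact kk_dvd a n
    have hq0 : n / k ≠ 0 := (Nat.div_pos (Nat.le_of_dvd (by omega) hdv) hk0).ne'
    apply Nat.mem_factoredNumbers_of_primeFactors_subset hq0
    intro p hp
    have hpn : p ∈ n.primeFactors := Nat.primeFactors_mono (Nat.div_dvd_of_dvd hdv) (by omega) hp
    rw [Nat.primeFactors_mul hk0.ne' (by omega), Finset.mem_union]
    by_cases hpa : p ∣ a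
    · right
      rw [Nat.mem_primeFactors]
      exact ⟨Nat.prime_of_mem_primeFactors hp, hpa, by omega⟩
    · left
      rw [← hkn, kk_primeFactors, mem_filter]
      exact ⟨hpn, hpa⟩)
  have hkp := tot_pos hk
  have hap : (0:ℝ) < Nat.totient a := by exact_mod_cast Nat.totient_pos.2 ha
  have hk1 : (0:ℝ) < k := by exact_mod_cast hk0
  rw [Nat.totient_mul hk'.2.2] at h3
  push_cast at h3
  calc (k:ℝ)⁻¹ * _ ≤ (k:ℝ)⁻¹ * ((k:ℝ) * a / (Nat.totient k * Nat.totient a)) := by gcongr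
    _ = _ := by field_simp

lemma selberg_row (a r U Q : ℕ) (ha : 1 ≤ a) (hQ : 1 ≤ Q) :
    (((range U).filter (fun u => (a*u+r).Prime ∧ Q < a*u+r)).card : ℝ) ≤
      ((a:ℝ) / Nat.totient a / Real.log (Q+1)) * U + (Q:ℝ)^2 := by
  have h1 := selberg_count a r U Q hQ
  have h2 := GG_lower a Q ha
  have hG := GG_ge_one (a := a) hQ
  have hQ' : (1:ℝ) ≤ Q := by exact_mod_cast hQ
  have hl : 0 < Real.log (Q+1) := Real.log_pos (by linarith)
  have h3 : (U:ℝ) / GG a Q ≤ ((a:ℝ) / Nat.totient a / Real.log (Q+1)) * U := by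
    rw [div_le_iff₀ (by linarith), mul_right_comm]
    have : 1 ≤ (a:ℝ) / Nat.totient a / Real.log (Q+1) * GG a Q := by
      rw [div_mul_eq_mul_div, le_div_iff₀ hl]; linarith
    nlinarith [(Nat.cast_nonneg U : (0:ℝ) ≤ U)]
  linarith

end

section

lemma tot_real (a : ℕ) : (Nat.totient a : ℝ) = a * ∏ p ∈ a.primeFactors, (1 - (p:ℝ)⁻¹) := by
  have h := congrArg (fun q : ℚ => (q:ℝ)) (Nat.totient_eq_mul_prod_factors a)
  simpa [Rat.cast_prod] using h

lemma tot_prod (a : ℕ) (ha : 1 ≤ a) : (a:ℝ) / Nat.totient a = ∏ p ∈ a.primeFactors, (p:ℝ)/((p:ℝ)-1) := by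
  have h2 : (Nat.totient a : ℝ) = a * ∏ p ∈ a.primeFactors, (1 - (p:ℝ)⁻¹) := tot_real a
  have h3 : ∏ p ∈ a.primeFactors, (1 - (p:ℝ)⁻¹) = ∏ p ∈ a.primeFactors, ((p:ℝ)/((p:ℝ)-1))⁻¹ := by
    apply Finset.prod_congr rfl
    intro p hp
    have : 2 ≤ p := (Nat.prime_of_mem_primeFactors hp).two_le
    have : (2:ℝ) ≤ p := by exact_mod_cast this
    field_simp
  rw [h2, h3, Finset.prod_inv_distrib]
  have ha' : (a:ℝ) ≠ 0 := by positivity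
  field_simp

lemma strip_step (q q' : ℕ) (B c : ℝ) (hq : 2 ≤ q) (hc : 0 ≤ c) (hqq : ∀ p : ℕ, p.Prime → q < p → q' ≤ p)
    (H : ∀ s : Finset ℕ, (∀ p ∈ s, p.Prime ∧ q' ≤ p) → (∏ p ∈ s, (p:ℝ)) < B → ∏ p ∈ s, (p:ℝ)/((p:ℝ)-1) ≤ c)
    (h1 : 1 ≤ c) :
    ∀ s : Finset ℕ, (∀ p ∈ s, p.Prime ∧ q ≤ p) → (∏ p ∈ s, (p:ℝ)) < q * B → ∏ p ∈ s, (p:ℝ)/((p:ℝ)-1) ≤ (q:ℝ)/((q:ℝ)-1) * c := by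
  intro s hs hB
  have hq2 : (2:ℝ) ≤ q := by exact_mod_cast hq
  have hr : 1 ≤ (q:ℝ)/((q:ℝ)-1) := by rw [one_le_div (by linarith)]; linarith
  rcases s.eq_empty_or_nonempty with rfl | hne
  · simp; nlinarith
  · set p := s.min' hne with hp
    have hps : p ∈ s := s.min'_mem hne
    have hpq : (q:ℝ) ≤ p := by exact_mod_cast (hs p hps).2
    rw [← Finset.mul_prod_erase s _ hps] at hB ⊢
    have h3 : ∏ p ∈ s.erase p, (p:ℝ)/((p:ℝ)-1) ≤ c := by
      apply H
      · intro r hr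
        have hrs := Finset.mem_of_mem_erase hr
        refine ⟨(hs r hrs).1, hqq r (hs r hrs).1 ?_⟩
        have : p < r := s.min'_lt_of_mem_erase_min' hne hr
        exact lt_of_le_of_lt (hs p hps).2 this
      · have : (0:ℝ) ≤ ∏ x ∈ s.erase p, (x:ℝ) := Finset.prod_nonneg (fun _ _ => by positivity)
        by_contra hcon
        push Not at hcon
        nlinarith
    apply mul_le_mul _ h3 _ (by positivity)
    · rw [div_le_div_iff₀ (by linarith) (by linarith)]; nlinarith
    · apply Finset.prod_nonneg
      intro r hr
      have hrs := Finset.mem_of_mem_erase hr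
      have : 2 ≤ r := (hs r hrs).1.two_le
      have : (2:ℝ) ≤ r := by exact_mod_cast this
      apply div_nonneg <;> linarith

lemma strip7 (s : Finset ℕ) (hs : ∀ p ∈ s, p.Prime ∧ 7 ≤ p) (hB : (∏ p ∈ s, (p:ℝ)) < 323323) :
    ∏ p ∈ s, (p:ℝ)/((p:ℝ)-1) ≤ 1.4772 := by
  have h19 : ∀ s : Finset ℕ, (∀ p ∈ s, p.Prime ∧ 19 ≤ p) → (∏ p ∈ s, (p:ℝ)) < 19 → ∏ p ∈ s, (p:ℝ)/((p:ℝ)-1) ≤ 1 := by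
    intro s hs hB
    rcases s.eq_empty_or_nonempty with rfl | ⟨p, hp⟩
    · simp
    · exfalso
      have h1 : p ≤ ∏ p ∈ s, p := Nat.le_of_dvd (Finset.prod_pos (fun x hx => (hs x hx).1.pos)) (Finset.dvd_prod_of_mem _ hp)
      have h2 := (hs p hp).2
      have : (∏ p ∈ s, p : ℕ) < 19 := by rw [← Nat.cast_prod] at hB; exact_mod_cast hB
      omega
  have h17 := strip_step 17 19 19 1 (by norm_num) (by norm_num) (by
    intro p hp h; by_contra hc; interval_cases p <;> revert hp <;> norm_num) h19 le_rfl
  have h13 := strip_step 13 17 _ _ (by norm_num) (by norm_num) (by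
    intro p hp h; by_contra hc; interval_cases p <;> revert hp <;> norm_num) h17 (by norm_num)
  have h11 := strip_step 11 13 _ _ (by norm_num) (by norm_num) (by
    intro p hp h; by_contra hc; interval_cases p <;> revert hp <;> norm_num) h13 (by norm_num)
  have h7 := strip_step 7 11 _ _ (by norm_num) (by norm_num) (by
    intro p hp h; by_contra hc; interval_cases p <;> revert hp <;> norm_num) h11 (by norm_num)
  refine (h7 s hs (by norm_num at hB ⊢; linarith)).trans (by norm_num)

lemma gcd30_mem (a : ℕ) : Nat.gcd a 30 ∈ div30 := by
  have h : Nat.gcd a 30 ∣ 30 := Nat.gcd_dvd_right a 30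
  have h2 : Nat.gcd a 30 ∈ Nat.divisors 30 := by simp [h]
  revert h2
  generalize Nat.gcd a 30 = g
  revert g
  decide +kernel

lemma tot_strip (a : ℕ) (ha : 1 ≤ a) (ha2 : a < 323323) :
    (a:ℝ) / Nat.totient a ≤ 1.4772 * ((Nat.gcd a 30 : ℕ) / Nat.totient (Nat.gcd a 30) : ℝ) := by
  have hg : 1 ≤ Nat.gcd a 30 := Nat.gcd_pos_of_pos_left _ ha
  rw [tot_prod a ha, tot_prod _ hg, Nat.primeFactors_gcd (by omega) (by norm_num)]
  rw [← Finset.prod_filter_mul_prod_filter_not a.primeFactors (fun p => p ∈ (30:ℕ).primeFactors)]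
  rw [Finset.filter_mem_eq_inter, mul_comm]
  apply mul_le_mul_of_nonneg_right
  · apply strip7
    · intro p hp
      rw [Finset.mem_filter] at hp
      have hpp := Nat.prime_of_mem_primeFactors hp.1
      refine ⟨hpp, ?_⟩
      by_contra hc
      apply hp.2
      have h2 := hpp.two_le
      rw [Nat.mem_primeFactors]
      refine ⟨hpp, ?_, by norm_num⟩
      interval_cases p <;> revert hpp <;> norm_num
    · have h1 : (∏ p ∈ a.primeFactors.filter (fun p => p ∉ (30:ℕ).primeFactors), p) ∣ a :=
        (Finset.prod_dvd_prod_of_subset _ _ _ (Finset.filter_subset _ _)).trans (Nat.prod_primeFactors_dvd a)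
      have h2 := Nat.le_of_dvd ha h1
      have : (∏ p ∈ a.primeFactors.filter (fun p => p ∉ (30:ℕ).primeFactors), p) < 323323 := by omega
      rw [← Nat.cast_prod]
      exact_mod_cast this
  · apply Finset.prod_nonneg
    intro r hr
    have : 2 ≤ r := (Nat.prime_of_mem_primeFactors (Finset.mem_inter.1 hr).1).two_le
    have : (2:ℝ) ≤ r := by exact_mod_cast this
    apply div_nonneg <;> linarith

lemma PhiF_mono (a g V : ℕ) (h : g ∣ a) : PhiF a V ≤ PhiF g V := by
  unfold PhiF
  apply Finset.sum_le_sum_of_subset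
  intro x hx
  rw [Finset.mem_filter] at *
  exact ⟨hx.1, hx.2.coprime_dvd_right h⟩

lemma Phi_bound_real (g V : ℕ) (hg : g ∈ div30) :
    (g:ℝ) / Nat.totient g * PhiF g V ≤ (V:ℝ)^2/2 + 3.25 := by
  have h := Phi_bound g V hg
  have hg0 := div30_pos g hg
  have ht : 0 < Nat.totient g := Nat.totient_pos.2 hg0
  have h' : (4:ℝ) * (g * PhiF g V) ≤ Nat.totient g * (2 * (V:ℝ)^2 + 13) := by exact_mod_cast h
  have ht' : (0:ℝ) < Nat.totient g := by exact_mod_cast ht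
  rw [div_mul_eq_mul_div, div_le_iff₀ ht']
  nlinarith

lemma Phi_mid (a V : ℕ) (ha : 1 ≤ a) (ha2 : a < 323323) :
    (a:ℝ) / Nat.totient a * PhiF a V ≤ 1.4772 * ((V:ℝ)^2/2 + 3.25) := by
  have h1 := tot_strip a ha ha2
  have h2 : (PhiF a V : ℝ) ≤ PhiF (Nat.gcd a 30) V := by exact_mod_cast PhiF_mono a _ V (Nat.gcd_dvd_left a 30)
  have h3 := Phi_bound_real (Nat.gcd a 30) V (gcd30_mem a)
  calc _ ≤ (1.4772 * ((Nat.gcd a 30 : ℕ) / Nat.totient (Nat.gcd a 30) : ℝ)) * PhiF (Nat.gcd a 30) V := by gcongr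
    _ ≤ _ := by rw [mul_assoc]; gcongr

/-- count of n ≤ T with no prime of s dividing n -/
def cs (s : Finset ℕ) (T : ℕ) : ℕ := ((Finset.Ioc 0 T).filter (fun n => ∀ p ∈ s, ¬ p ∣ n)).card

lemma cs_insert (s : Finset ℕ) (p T : ℕ) (hs : ∀ q ∈ s, q.Prime) (hp : p.Prime) (hps : p ∉ s) :
    cs (insert p s) T + cs s (T / p) = cs s T := by
  unfold cs
  rw [← Finset.card_filter_add_card_filter_not (s := (Finset.Ioc 0 T).filter (fun n => ∀ p ∈ s, ¬ p ∣ n)) (fun n => ¬ p ∣ n)]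
  congr 1
  · congr 1
    ext n
    simp only [Finset.mem_filter, Finset.forall_mem_insert]
    tauto
  · apply Finset.card_bij (fun n _ => p * n)
    · intro n hn
      simp only [Finset.mem_filter, Finset.mem_Ioc] at hn ⊢
      refine ⟨⟨⟨Nat.mul_pos hp.pos hn.1.1, ?_⟩, ?_⟩, by simp⟩
      · have := (Nat.le_div_iff_mul_le hp.pos).1 hn.1.2
        linarith
      · intro q hq hd
        rcases (hs q hq).dvd_mul.1 hd with h | h
        · rw [(Nat.prime_dvd_prime_iff_eq (hs q hq) hp)] at h
          exact hps (h ▸ hq)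
        · exact hn.2 q hq h
    · intro x _ y _ hxy
      exact Nat.eq_of_mul_eq_mul_left hp.pos hxy
    · intro n hn
      simp only [Finset.mem_filter, Finset.mem_Ioc, not_not] at hn
      obtain ⟨k, rfl⟩ := hn.2
      refine ⟨k, ?_, rfl⟩
      simp only [Finset.mem_filter, Finset.mem_Ioc]
      refine ⟨⟨Nat.pos_of_mul_pos_left hn.1.1.1, ?_⟩, ?_⟩
      · rw [Nat.le_div_iff_mul_le hp.pos]; linarith [hn.1.1.2]
      · intro q hq hd
        exact hn.1.2 q hq (hd.mul_left p)

lemma cs_bound (s : Finset ℕ) (hs : ∀ q ∈ s, q.Prime) : ∀ t : ℝ, 0 ≤ t →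
    |(cs s ⌊t⌋₊ : ℝ) - t * ∏ p ∈ s, (1 - (p:ℝ)⁻¹)| ≤ 2 ^ s.card := by
  induction s using Finset.induction_on with
  | empty =>
    intro t ht
    simp [cs]
    have h1 := Nat.floor_le ht
    have h2 := Nat.lt_floor_add_one t
    rw [abs_le]; constructor <;> linarith
  | insert p s hps ih =>
    intro t ht
    have hs' : ∀ q ∈ s, q.Prime := fun q hq => hs q (Finset.mem_insert_of_mem hq)
    have hp : p.Prime := hs p (Finset.mem_insert_self _ _)
    have h1 := ih hs' t ht
    have h2 := ih hs' (t / p) (by positivity)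
    have h3 := cs_insert s p ⌊t⌋₊ hs' hp hps
    rw [Nat.floor_div_natCast] at h2
    rw [Finset.prod_insert hps, Finset.card_insert_of_notMem hps, pow_succ]
    have h4 : (cs (insert p s) ⌊t⌋₊ : ℝ) = cs s ⌊t⌋₊ - cs s (⌊t⌋₊ / p) := by
      rw [← h3]; push_cast; ring
    rw [h4]
    have h5 : t * ((1 - (p:ℝ)⁻¹) * ∏ p ∈ s, (1 - (p:ℝ)⁻¹)) = t * ∏ p ∈ s, (1 - (p:ℝ)⁻¹) - t / p * ∏ p ∈ s, (1 - (p:ℝ)⁻¹) := by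
      field_simp
    rw [h5]
    rw [abs_le] at *
    constructor <;> linarith [h1.1, h1.2, h2.1, h2.2]

lemma cnt_eq_cs (a T : ℕ) (ha : 1 ≤ a) : cnt a 1 T = cs a.primeFactors T := by
  unfold cnt cs
  rw [Nat.count_eq_card_filter_range]
  apply Finset.card_bij (fun n _ => n + 1)
  · intro n hn
    simp only [Finset.mem_filter, Finset.mem_range, Finset.mem_Ioc] at hn ⊢
    refine ⟨by omega, ?_⟩
    intro p hp hd
    exact Nat.not_coprime_of_dvd_of_dvd (Nat.prime_of_mem_primeFactors hp).one_lt hd (Nat.dvd_of_mem_primeFactors hp) hn.2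
  · intro x _ y _ h; simpa using h
  · intro n hn
    simp only [Finset.mem_filter, Finset.mem_range, Finset.mem_Ioc] at hn
    refine ⟨n - 1, ?_, by omega⟩
    simp only [Finset.mem_filter, Finset.mem_range]
    refine ⟨by omega, ?_⟩
    rw [show n - 1 + 1 = n by omega]
    apply Nat.Coprime.symm
    apply Nat.coprime_of_dvd
    intro k hk hka hkn
    exact hn.2 k (Nat.mem_primeFactors.2 ⟨hk, hka, by omega⟩) hkn

lemma cnt_le (a T : ℕ) (ha : 1 ≤ a) : (cnt a 1 T : ℝ) ≤ (Nat.totient a : ℝ) / a * T + 2 ^ a.primeFactors.card := by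
  have h := cs_bound a.primeFactors (fun q hq => Nat.prime_of_mem_primeFactors hq) T (by positivity)
  rw [Nat.floor_natCast, ← cnt_eq_cs a T ha, abs_le] at h
  have h2 : (Nat.totient a : ℝ) = a * ∏ p ∈ a.primeFactors, (1 - (p:ℝ)⁻¹) := tot_real a
  have ha' : (0:ℝ) < a := by positivity
  have h3 : (Nat.totient a : ℝ) / a = ∏ p ∈ a.primeFactors, (1 - (p:ℝ)⁻¹) := by
    rw [h2]; field_simp
  rw [h3]; linarith [h.2]

lemma Phi_gen (a V : ℕ) (ha : 1 ≤ a) :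
    (PhiF a V : ℝ) ≤ (Nat.totient a : ℝ) / a * ((V:ℝ)^2/2) + 2 ^ a.primeFactors.card * V := by
  induction V with
  | zero => simp [PhiF_zero]
  | succ n ih =>
    rw [PhiF_succ]
    have := cnt_le a n ha
    have h0 : (0:ℝ) ≤ (Nat.totient a : ℝ) / a := by positivity
    push_cast
    nlinarith

lemma om_bound (a : ℕ) (ha : 1 ≤ a) : ((a:ℝ) / Nat.totient a * 2 ^ a.primeFactors.card)^2 ≤ 30 * a := by
  rw [tot_prod a ha, ← Finset.prod_const, ← Finset.prod_mul_distrib, ← Finset.prod_pow]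
  have h1 : ∏ p ∈ a.primeFactors, ((p:ℝ)/((p:ℝ)-1) * 2)^2 ≤
      ∏ p ∈ a.primeFactors, ((p:ℝ) * ((if p = 2 then (8:ℝ) else 1) * (if p = 3 then (3:ℝ) else 1) * (if p = 5 then (1.25:ℝ) else 1))) := by
    apply Finset.prod_le_prod
    · intros; positivity
    · intro p hp
      have hpp := Nat.prime_of_mem_primeFactors hp
      by_cases h7 : p < 7
      · have := hpp.two_le
        interval_cases p
        · norm_num
        · norm_num
        · exfalso; revert hpp; norm_num
        · norm_num
        · exfalso; revert hpp; norm_num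
      · have : p ≠ 2 ∧ p ≠ 3 ∧ p ≠ 5 := by omega
        simp only [this.1, this.2.1, this.2.2, if_false, mul_one]
        have : (7:ℝ) ≤ p := by exact_mod_cast (by omega : 7 ≤ p)
        rw [div_mul_eq_mul_div, div_pow, div_le_iff₀ (by nlinarith)]
        nlinarith
  refine h1.trans ?_
  rw [Finset.prod_mul_distrib, Finset.prod_mul_distrib, Finset.prod_mul_distrib, Finset.prod_ite_eq', Finset.prod_ite_eq', Finset.prod_ite_eq']
  have h2 : (∏ p ∈ a.primeFactors, (p:ℝ)) ≤ a := by
    have := Nat.le_of_dvd ha (Nat.prod_primeFactors_dvd a)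
    rw [← Nat.cast_prod]
    exact_mod_cast this
  have h3 : (0:ℝ) ≤ ∏ p ∈ a.primeFactors, (p:ℝ) := Finset.prod_nonneg (fun _ _ => by positivity)
  split_ifs <;> nlinarith

lemma Phi_large (a V : ℕ) (ha : 1 ≤ a) :
    (a:ℝ) / Nat.totient a * PhiF a V ≤ (V:ℝ)^2/2 + 5.48 * √a * V := by
  have h := Phi_gen a V ha
  have h2 := om_bound a ha
  have ht : (0:ℝ) < Nat.totient a := by exact_mod_cast Nat.totient_pos.2 ha
  have h3 : (a:ℝ) / Nat.totient a * 2 ^ a.primeFactors.card ≤ 5.48 * √a := by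
    apply abs_le_of_sq_le_sq' _ (by positivity) |>.2
    rw [mul_pow 5.48, Real.sq_sqrt (by positivity)]
    have : (0:ℝ) ≤ a := by positivity
    linarith
  have ha' : (0:ℝ) < a := by positivity
  calc _ ≤ (a:ℝ) / Nat.totient a * ((Nat.totient a : ℝ) / a * ((V:ℝ)^2/2) + 2 ^ a.primeFactors.card * V) := by gcongr
    _ = (V:ℝ)^2/2 + ((a:ℝ) / Nat.totient a * 2 ^ a.primeFactors.card) * V := by field_simp
    _ ≤ _ := by gcongr

end

section

noncomputable def whl (a V : ℕ) : ℝ :=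
  (Nat.totient (30 / Nat.gcd a 30) : ℝ) / (30 / Nat.gcd a 30 : ℕ) * PhiF a V

lemma div30_facts : ∀ g ∈ div30, 30 / g ∈ div30 ∧ 30 / g * g = 30 ∧
    Nat.totient (30 / g) * Nat.totient g = 8 ∧ Nat.totient (30 / g) ≤ 30 / g ∧ Nat.Coprime g (30/g) := by
  decide +kernel

lemma cop30 (a : ℕ) : Nat.Coprime a (30 / Nat.gcd a 30) := by
  have h := div30_facts _ (gcd30_mem a)
  have hd : 30 / Nat.gcd a 30 ∣ 30 := Dvd.intro _ h.2.1
  have h1 : Nat.gcd a (30 / Nat.gcd a 30) ∣ Nat.gcd a 30 := Nat.gcd_dvd_gcd_of_dvd_right _ hd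
  have h2 : Nat.gcd a (30 / Nat.gcd a 30) ∣ 30 / Nat.gcd a 30 := Nat.gcd_dvd_right _ _
  have h3 := Nat.dvd_gcd h1 h2
  rw [h.2.2.2.2] at h3
  exact Nat.dvd_one.1 h3

lemma whl_le (a V : ℕ) : whl a V ≤ 8/30 * ((V:ℝ)^2/2 + 3.25) := by
  have hg := gcd30_mem a
  have h2 : (PhiF a V : ℝ) ≤ PhiF (Nat.gcd a 30) V := by exact_mod_cast PhiF_mono a _ V (Nat.gcd_dvd_left a 30)
  have h3 := Phi_bound_real (Nat.gcd a 30) V hg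
  unfold whl
  obtain ⟨f1, f2, f3, f4, f5⟩ := div30_facts _ hg
  set g := Nat.gcd a 30
  have hg0 := div30_pos g hg
  have ht : (0:ℝ) < Nat.totient g := by exact_mod_cast Nat.totient_pos.2 hg0
  have f2' : ((30 / g : ℕ):ℝ) * g = 30 := by exact_mod_cast f2
  have f3' : (Nat.totient (30 / g):ℝ) * Nat.totient g = 8 := by exact_mod_cast f3
  have hg0' : (0:ℝ) < g := by exact_mod_cast hg0
  have e : (Nat.totient (30 / g) : ℝ) / (30 / g : ℕ) = 8/30 * ((g:ℝ)/Nat.totient g) := by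
    have e1 : ((30 / g : ℕ):ℝ) = 30 / g := by field_simp; linarith
    have e2 : (Nat.totient (30 / g):ℝ) = 8 / Nat.totient g := by field_simp; linarith
    rw [e1, e2]; field_simp
  rw [e]
  calc _ ≤ 8/30 * ((g:ℝ)/Nat.totient g) * PhiF g V := by gcongr
    _ ≤ _ := by rw [mul_assoc]; gcongr

lemma wheel_decomp (a b V : ℕ) (ha : 2 ≤ a) (hab : a < b) (h : Nat.Coprime a b) (hV : 1 ≤ V) (hb : 6 ≤ b) :
    (Nat.primeCounting (V*b) : ℝ) ≤ piStar a b + 2 + ((b:ℝ)/a) * whl a V + 2.6 * ((V:ℝ) - 1) := by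
  obtain ⟨f1, f2, f3, f4, f5⟩ := div30_facts _ (gcd30_mem a)
  have hc := cop30 a
  have hd : 30 / Nat.gcd a 30 ∣ 30 := Dvd.intro _ f2
  unfold whl
  set m := 30 / Nat.gcd a 30
  have hm0 := div30_pos m f1
  have hm0' : (0:ℝ) < m := by exact_mod_cast hm0
  have hk1 : (Nat.totient m : ℝ) / m ≤ 1 := by
    rw [div_le_one hm0']; exact_mod_cast f4
  have := decomp_real a b V ((Nat.totient m : ℝ) / m) 1.6 ha hab h hV (by positivity) (by norm_num) (by
    intro v U hv hva
    refine le_trans ?_ (wheel_count m a (b*v) U f1 hc)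
    norm_cast
    apply Finset.card_le_card
    intro u hu
    rw [Finset.mem_filter] at *
    refine ⟨hu.1, ?_⟩
    apply Nat.Coprime.coprime_dvd_right hd
    rw [Nat.Prime.coprime_iff_not_dvd hu.2]
    intro hdv
    have : a*u+b*v ∣ 2*3*5 := by simpa using hdv
    have hge : 6 ≤ a*u+b*v := by nlinarith
    rcases (hu.2.dvd_mul).1 this with h' | h'
    · rcases (hu.2.dvd_mul).1 h' with h' | h'
      · have := Nat.le_of_dvd (by norm_num) h'; omega
      · have := Nat.le_of_dvd (by norm_num) h'; omega
    · have := Nat.le_of_dvd (by norm_num) h'; omega)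
  have hV' : (1:ℝ) ≤ V := by exact_mod_cast hV
  have e : (Nat.totient m : ℝ) / m * ((b:ℝ)/a) * PhiF a V = (b:ℝ)/a * ((Nat.totient m : ℝ) / m * PhiF a V) := by ring
  rw [e] at this
  nlinarith

lemma selberg_decomp (a b V Q : ℕ) (ha : 2 ≤ a) (hab : a < b) (h : Nat.Coprime a b) (hV : 1 ≤ V) (hQ : 1 ≤ Q) (hQb : Q < b) :
    (Nat.primeCounting (V*b) : ℝ) ≤ piStar a b + 2 + (b:ℝ)/a * ((a:ℝ)/Nat.totient a * PhiF a V) / Real.log (Q+1) + (1 + (Q:ℝ)^2) * ((V:ℝ) - 1) := by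
  have hG := GG_ge_one (a := a) hQ
  have hGl := GG_lower a Q (by omega)
  have hV' : (1:ℝ) ≤ V := by exact_mod_cast hV
  have hQ' : (1:ℝ) ≤ Q := by exact_mod_cast hQ
  have hlog : 0 < Real.log (Q+1) := Real.log_pos (by linarith)
  have := decomp_real a b V (1/GG a Q) ((Q:ℝ)^2) ha hab h hV (by positivity) (by positivity) (by
    intro v U hv hva
    have h1 := selberg_count a (b*v) U Q hQ
    rw [one_div_mul_eq_div]
    refine le_trans ?_ h1
    norm_cast
    apply Finset.card_le_card
    intro u hu
    rw [Finset.mem_filter] at *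
    refine ⟨hu.1, hu.2, by nlinarith⟩)
  have hk : 1/GG a Q ≤ 1 := by rw [div_le_one (by linarith)]; exact hG
  have hk2 : 1/GG a Q ≤ (a:ℝ)/Nat.totient a / Real.log (Q+1) := by
    rw [div_le_div_iff₀ (by linarith) hlog]; linarith
  have e : 1/GG a Q * ((b:ℝ)/a) * PhiF a V ≤ (b:ℝ)/a * ((a:ℝ)/Nat.totient a * PhiF a V) / Real.log (Q+1) := by
    calc _ ≤ ((a:ℝ)/Nat.totient a / Real.log (Q+1)) * ((b:ℝ)/a) * PhiF a V := by gcongr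
      _ = _ := by ring
  nlinarith

end

section

lemma simple_lower (a b : ℕ) (ha : 2 ≤ a) (hab : a < b) (h : Nat.Coprime a b) :
    Nat.primeCounting (b-1) ≤ piStar a b + 1 := by
  have hfin := nonrep_finite a b ha hab h
  have e : Nat.primeCounting (b-1) = ((Finset.range b).filter Nat.Prime).card := by
    rw [Nat.primeCounting, Nat.primeCounting', Nat.count_eq_card_filter_range, show b - 1 + 1 = b by omega]
  have hsub : ((((Finset.range b).filter Nat.Prime).erase a : Finset ℕ) : Set ℕ) ⊆
      {p : ℕ | p.Prime ∧ ¬ ∃ u v : ℕ, p = a * u + b * v} := by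
    intro p hp
    simp only [Finset.coe_erase, Set.mem_sdiff, Finset.mem_coe, Finset.mem_filter, Finset.mem_range, Set.mem_singleton_iff] at hp
    refine ⟨hp.1.2, ?_⟩
    rintro ⟨u, v, huv⟩
    have hv : v = 0 := by
      by_contra hv
      have : 1 ≤ v := by omega
      have := hp.1.1
      nlinarith
    subst hv
    have : a ∣ p := ⟨u, by simpa using huv⟩
    rcases (Nat.dvd_prime hp.1.2).1 this with h1 | h1
    · omega
    · exact hp.2 h1.symm
  have h1 := Set.ncard_le_ncard hsub hfin
  rw [Set.ncard_coe_finset] at h1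
  have h2 := Finset.pred_card_le_card_erase (s := (Finset.range b).filter Nat.Prime) (a := a)
  unfold piStar
  omega


def MM : ℕ := 2*3*5*7*11*13*17*19*23*29*31*37*41*43
def sp : Finset ℕ := {2,3,5,7,11,13,17,19,23,29,31,37,41,43}
def pc (n : ℕ) : ℕ := Nat.count (fun k => Nat.gcd k MM = 1) n

lemma dvd_MM {p : ℕ} (hp : p.Prime) : p ∣ MM ↔ p ∈ sp := by
  constructor
  · intro h
    unfold MM at h
    simp only [hp.dvd_mul] at h
    unfold sp
    simp only [Finset.mem_insert, Finset.mem_singleton]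
    rcases h with ((((((((((((h|h)|h)|h)|h)|h)|h)|h)|h)|h)|h)|h)|h)|h <;>
      (rw [Nat.prime_dvd_prime_iff_eq hp (by norm_num)] at h; tauto)
  · revert p
    have : ∀ p ∈ sp, p ∣ MM := by decide +kernel
    intro p _ h; exact this p h

lemma pi_card (N : ℕ) : Nat.primeCounting N = ((Finset.range (N+1)).filter Nat.Prime).card := by
  rw [Nat.primeCounting, Nat.primeCounting', Nat.count_eq_card_filter_range]

lemma pi_le_pc (N : ℕ) : Nat.primeCounting N ≤ 14 + pc (N+1) := by
  rw [pi_card, pc, Nat.count_eq_card_filter_range]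
  have hs : sp.card = 14 := by decide
  rw [← hs]
  refine le_trans (Finset.card_le_card ?_) (Finset.card_union_le _ _)
  intro p hp
  rw [Finset.mem_filter] at hp
  rw [Finset.mem_union, Finset.mem_filter]
  by_cases h : p ∣ MM
  · left; exact (dvd_MM hp.2).1 h
  · right; exact ⟨hp.1, (Nat.Prime.coprime_iff_not_dvd hp.2).2 h⟩

lemma pc_le_pi (N : ℕ) (h1 : 43 ≤ N) (h2 : N < 2209) : 13 + pc (N+1) ≤ Nat.primeCounting N := by
  rw [pi_card, pc, Nat.count_eq_card_filter_range]
  have hs : sp.card = 14 := by decide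
  have hsp : ∀ p ∈ sp, p.Prime ∧ p ≤ 43 := by
    intro p hp
    unfold sp at hp
    simp only [Finset.mem_insert, Finset.mem_singleton] at hp
    rcases hp with rfl|rfl|rfl|rfl|rfl|rfl|rfl|rfl|rfl|rfl|rfl|rfl|rfl|rfl <;> norm_num
  have hd : Disjoint sp (((Finset.range (N+1)).filter (fun k => Nat.gcd k MM = 1)).erase 1) := by
    rw [Finset.disjoint_left]
    intro p hp hp2
    have hpp := (hsp p hp).1
    have := (dvd_MM hpp).2 hp
    rw [Finset.mem_erase, Finset.mem_filter] at hp2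
    exact (Nat.Prime.coprime_iff_not_dvd hpp).1 hp2.2.2 this
  have h3 := Finset.pred_card_le_card_erase (s := (Finset.range (N+1)).filter (fun k => Nat.gcd k MM = 1)) (a := 1)
  have h4 := Finset.card_union_of_disjoint hd
  have h5 : (sp ∪ ((Finset.range (N+1)).filter (fun k => Nat.gcd k MM = 1)).erase 1).card ≤ ((Finset.range (N+1)).filter Nat.Prime).card := by
    apply Finset.card_le_card
    intro n hn
    rw [Finset.mem_union] at hn
    rw [Finset.mem_filter, Finset.mem_range]
    rcases hn with hn | hn
    · have := hsp n hn; exact ⟨by omega, this.1⟩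
    · rw [Finset.mem_erase, Finset.mem_filter, Finset.mem_range] at hn
      refine ⟨hn.2.1, ?_⟩
      by_contra hnp
      have hn1 := hn.1
      have hn0 : n ≠ 0 := by
        rintro rfl
        have := hn.2.2
        revert this; decide
      have hmf := Nat.minFac_prime hn1
      have hsq := Nat.minFac_sq_le_self (by omega) hnp
      have hlt : n.minFac < 47 := by nlinarith [hn.2.1]
      have hin : n.minFac ∈ sp := by
        revert hmf hlt
        generalize n.minFac = q
        intro hq hlt
        have hq2 := hq.two_le
        unfold sp
        interval_cases q <;> first | decide | (exfalso; revert hq; norm_num)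
      have hdv := (dvd_MM hmf).2 hin
      exact (Nat.Prime.coprime_iff_not_dvd hmf).1 ((Nat.Coprime.coprime_dvd_left (Nat.minFac_dvd n) hn.2.2)) hdv
  omega

set_option maxRecDepth 100000 in
lemma fin0' : ∀ b < 45, 4 ≤ b → 14 + pc (b^2+1-3*b+1) + 25 ≤ 25 * Nat.primeCounting (b-1) := by
  decide +kernel
lemma fin0 (b : ℕ) (h1 : b < 45) (h2 : 4 ≤ b) : Nat.primeCounting (b^2+1-3*b) + 25 ≤ 25 * Nat.primeCounting (b-1) := by
  have := fin0' b h1 h2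
  have := pi_le_pc (b^2+1-3*b)
  omega
set_option maxRecDepth 100000 in
lemma fin_up : pc 2001 ≤ 311 ∧ pc 3601 ≤ 686 ∧ pc 5401 ≤ 1111 ∧ pc 7201 ≤ 1511 := by decide +kernel
set_option maxRecDepth 100000 in
lemma fin_lo : 14 ≤ Nat.primeCounting 44 ∧ 29 ≤ Nat.primeCounting 111 ∧ 46 ≤ Nat.primeCounting 199 := by decide +kernel
set_option maxRecDepth 100000 in
lemma fin_pc : pc 300 = 49 ∧ pc 241=39∧ pc 258=42∧ pc 282=47∧ pc 322=53∧ pc 370=60∧ pc 426=69∧ pc 498=81∧ pc 594=95∧ pc 706=113∧ pc 850=133∧ pc 1010=156∧ pc 1194=183∧ pc 1410=210∧ pc 1626=244∧ pc 1898=277∧ pc 2162=313 := by decide +kernel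

lemma pi_lin (N : ℕ) (h1 : 240 ≤ N) (h2 : N ≤ 2400) : N + 160 ≤ 8 * Nat.primeCounting N := by
  have hm : ∀ k ≤ N, Nat.primeCounting k ≤ Nat.primeCounting N := fun k hk => Nat.monotone_primeCounting hk
  obtain ⟨_, p1, p2, p3, p4, p5, p6, p7, p8, p9, p10, p11, p12, p13, p14, p15, p16⟩ := fin_pc
  have key : ∀ k c, 43 ≤ k → k < 2209 → pc (k+1) = c → k ≤ N → 13 + c ≤ Nat.primeCounting N := by
    intro k c h3 h4 h5 h6
    have := pc_le_pi k h3 h4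
    have := hm k h6
    omega
  by_cases c : N ≤ 256
  · have := key 240 _ (by omega) (by omega) p1 (by omega); omega
  by_cases c : N ≤ 280
  · have := key 257 _ (by omega) (by omega) p2 (by omega); omega
  by_cases c : N ≤ 320
  · have := key 281 _ (by omega) (by omega) p3 (by omega); omega
  by_cases c : N ≤ 368
  · have := key 321 _ (by omega) (by omega) p4 (by omega); omega
  by_cases c : N ≤ 424
  · have := key 369 _ (by omega) (by omega) p5 (by omega); omega
  by_cases c : N ≤ 496
  · have := key 425 _ (by omega) (by omega) p6 (by omega); omega
  by_cases c : N ≤ 592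
  · have := key 497 _ (by omega) (by omega) p7 (by omega); omega
  by_cases c : N ≤ 704
  · have := key 593 _ (by omega) (by omega) p8 (by omega); omega
  by_cases c : N ≤ 848
  · have := key 705 _ (by omega) (by omega) p9 (by omega); omega
  by_cases c : N ≤ 1008
  · have := key 849 _ (by omega) (by omega) p10 (by omega); omega
  by_cases c : N ≤ 1192
  · have := key 1009 _ (by omega) (by omega) p11 (by omega); omega
  by_cases c : N ≤ 1408
  · have := key 1193 _ (by omega) (by omega) p12 (by omega); omega
  by_cases c : N ≤ 1624
  · have := key 1409 _ (by omega) (by omega) p13 (by omega); omega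
  by_cases c : N ≤ 1896
  · have := key 1625 _ (by omega) (by omega) p14 (by omega); omega
  by_cases c : N ≤ 2160
  · have := key 1897 _ (by omega) (by omega) p15 (by omega); omega
  · have := key 2161 _ (by omega) (by omega) p16 (by omega); omega

/-- regime 0 -/
lemma reg0 (a b : ℕ) (ha : 2 ≤ a) (hab : a < b) (h : Nat.Coprime a b) (hN : a * b ≤ 2000) :
    Nat.primeCounting (S a b) ≤ 25 * piStar a b := by
  have h1 := simple_lower a b ha hab h
  by_cases hb3 : b = 3
  · obtain rfl : a = 2 := by omega
    subst hb3
    have : Nat.primeCounting (S 2 3) = 0 := by decide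
    omega
  by_cases hb : b < 45
  · have h2 := fin0 b hb (by omega)
    have h3 : S a b ≤ b^2+1-3*b := by
      unfold S
      obtain ⟨k, rfl⟩ : ∃ k, b = a + 1 + k := ⟨b - a - 1, by omega⟩
      have : a * (a+1+k) + 3 * (a+1+k) ≤ (a+1+k)^2 + 1 + a + (a+1+k) := by nlinarith
      omega
    have h4 := Nat.monotone_primeCounting h3
    omega
  · have h3 : S a b ≤ 2000 := by unfold S; omega
    have h4 := Nat.monotone_primeCounting h3
    have h5 : Nat.primeCounting 44 ≤ Nat.primeCounting (b-1) := Nat.monotone_primeCounting (by omega)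
    have h6 := pi_le_pc 2000
    have h7 := fin_up.1
    have h8 := fin_lo.1
    simp only [Nat.reduceAdd] at h6
    omega

/-- regime 1, small b -/
lemma reg1 (a b : ℕ) (ha : 2 ≤ a) (ha2 : a ≤ 18) (hab : a < b) (h : Nat.Coprime a b) (hb1 : 112 ≤ b) (hb2 : b < 400) :
    Nat.primeCounting (S a b) ≤ 25 * piStar a b := by
  have h1 := simple_lower a b ha hab h
  have hS : S a b ≤ 18 * b := by
    unfold S
    have : a * b ≤ 18 * b := by gcongr
    omega
  obtain ⟨_, u1, u2, u3⟩ := fin_up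
  obtain ⟨_, l1, l2⟩ := fin_lo
  have l3 := pc_le_pi 299 (by norm_num) (by norm_num)
  have l3' := fin_pc.1
  have v1 := pi_le_pc 3600
  have v2 := pi_le_pc 5400
  have v3 := pi_le_pc 7200
  simp only [Nat.reduceAdd] at v1 v2 v3 l3
  by_cases c1 : b ≤ 200
  · have h4 : Nat.primeCounting (S a b) ≤ Nat.primeCounting 3600 := Nat.monotone_primeCounting (by omega)
    have h5 : Nat.primeCounting 111 ≤ Nat.primeCounting (b-1) := Nat.monotone_primeCounting (by omega)
    omega
  by_cases c2 : b ≤ 300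
  · have h4 : Nat.primeCounting (S a b) ≤ Nat.primeCounting 5400 := Nat.monotone_primeCounting (by omega)
    have h5 : Nat.primeCounting 199 ≤ Nat.primeCounting (b-1) := Nat.monotone_primeCounting (by omega)
    omega
  · have h4 : Nat.primeCounting (S a b) ≤ Nat.primeCounting 7200 := Nat.monotone_primeCounting (by omega)
    have h5 : Nat.primeCounting 299 ≤ Nat.primeCounting (b-1) := Nat.monotone_primeCounting (by omega)
    omega

end

section
open Real

lemma S_le (a b : ℕ) : S a b ≤ a * b := by unfold S; omega

lemma pi_S_le (a b : ℕ) (hN : 2000 ≤ a * b) : (Nat.primeCounting (S a b) : ℝ) ≤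
    1.1135 * ((a:ℝ)*b) / log ((a:ℝ)*b) + 10 + 2.2181 * ((a:ℝ)*b) / log ((a:ℝ)*b) ^ 2 := by
  have h1 : (Nat.primeCounting (S a b) : ℝ) ≤ Nat.primeCounting (a*b) := by
    exact_mod_cast Nat.monotone_primeCounting (S_le a b)
  have h2 := pi_upper (a*b) hN
  push_cast at h2
  have hN' : (2000:ℝ) ≤ (a:ℝ)*b := by exact_mod_cast hN
  have hL : 0 < log ((a:ℝ)*b) := log_pos (by linarith)
  have e : (1.1135 * ((a:ℝ)*b) + 10 * log ((a:ℝ)*b)) / log ((a:ℝ)*b) = 1.1135 * ((a:ℝ)*b) / log ((a:ℝ)*b) + 10 := by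
    field_simp
  rw [e] at h2
  linarith

lemma core (a b V : ℕ) (lx E : ℝ) (hV : 1 ≤ V) (hVa : 12 * a ≤ 100 * V) (hX : 60 ≤ V * b)
    (hN : 2000 ≤ a * b) (hlx : lx ≤ log ((a:ℝ)/V))
    (hE : (Nat.primeCounting (V*b) : ℝ) ≤ piStar a b + 2 + E)
    (hmain : (E + 7.4) * log ((a:ℝ)*b) / ((V:ℝ)*b) ≤ 0.5501 + (0.92129 * lx - 0.7394) / log ((a:ℝ)*b)) :
    0.04 * (Nat.primeCounting (S a b) : ℝ) ≤ piStar a b := by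
  have hu := pi_S_le a b hN
  have hl := pi_lower (V*b) hX
  push_cast at hl
  have hN' : (2000:ℝ) ≤ (a:ℝ)*b := by exact_mod_cast hN
  have hX' : (60:ℝ) ≤ (V:ℝ)*b := by exact_mod_cast hX
  have hV' : (1:ℝ) ≤ V := by exact_mod_cast hV
  have hVa' : (12:ℝ) * a ≤ 100 * V := by exact_mod_cast hVa
  have hL : 0 < log ((a:ℝ)*b) := log_pos (by linarith)
  have hl0 : 0 < log ((V:ℝ)*b) := log_pos (by linarith)
  have hb : (0:ℝ) < b := by
    rcases Nat.eq_zero_or_pos b with h | h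
    · subst h; norm_num at hX'
    · exact_mod_cast h
  have ha : (0:ℝ) < a := by
    rcases Nat.eq_zero_or_pos a with h | h
    · subst h; norm_num at hN'
    · exact_mod_cast h
  have hlog : log ((V:ℝ)*b) = log ((a:ℝ)*b) - log ((a:ℝ)/V) := by
    rw [log_mul (by positivity) (by positivity), log_mul (by positivity) (by positivity), log_div (by positivity) (by positivity)]; ring
  set L := log ((a:ℝ)*b) with hLdef
  set l := log ((V:ℝ)*b) with hldef
  set X := (V:ℝ)*b with hXdef
  have habX : (a:ℝ)*b ≤ 8.33334 * X := by
    rw [hXdef]; nlinarith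
  set P := (Nat.primeCounting (V*b) : ℝ)
  have hP : 0.92129 * X / l - 5 ≤ P := by
    rw [sub_le_iff_le_add, div_le_iff₀ hl0]; linarith
  have hX0 : 0 < X := by linarith
  have hlL : 1 / L * (1 + lx / L) ≤ 1 / l := by
    have h1 : l ≤ L - lx := by linarith
    rw [show 1 / L * (1 + lx / L) = (L + lx)/L^2 by field_simp]
    rw [div_le_div_iff₀ (by positivity) hl0]
    rcases le_or_gt 0 (L + lx) with h | h
    · nlinarith [sq_nonneg lx]
    · nlinarith [sq_nonneg L]
  have hP2 : 0.92129 * X * (1 / L * (1 + lx / L)) - 5 ≤ P := by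
    refine le_trans ?_ hP
    rw [show 0.92129 * X / l = 0.92129 * X * (1/l) by ring]
    gcongr
  have hE2 : E + 7.4 ≤ X / L * (0.5501 + (0.92129 * lx - 0.7394) / L) := by
    rw [div_le_iff₀ hX0] at hmain
    rw [div_mul_eq_mul_div, le_div_iff₀ hL]
    linarith
  have hq1 : 0 ≤ X / L := by positivity
  have hq2 : 0 ≤ X / L^2 := by positivity
  have e1 : 0.92129 * X * (1 / L * (1 + lx / L)) = 0.92129 * (X/L) + 0.92129 * lx * (X / L^2) := by
    field_simp
  have e2 : X / L * (0.5501 + (0.92129 * lx - 0.7394) / L) = 0.5501 * (X / L) + (0.92129 * lx - 0.7394) * (X/L^2) := by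
    field_simp
  rw [e1] at hP2
  rw [e2] at hE2
  have u1 : 1.1135 * ((a:ℝ)*b) / L ≤ 9.2792 * (X / L) := by
    rw [← mul_div_assoc]
    apply div_le_div_of_nonneg_right _ (by positivity)
    linarith
  have u2 : 2.2181 * ((a:ℝ)*b) / L^2 ≤ 18.485 * (X / L^2) := by
    rw [← mul_div_assoc]
    apply div_le_div_of_nonneg_right _ (by positivity)
    linarith
  linarith

lemma whl_fin (a b V : ℕ) (lx y M e : ℝ) (ha : 2 ≤ a) (hab : a < b) (h : Nat.Coprime a b) (hV : 1 ≤ V) (hVa : 12 * a ≤ 100 * V)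
    (hX : 60 ≤ V * b) (hN : 2000 ≤ a * b) (hlx : lx ≤ log ((a:ℝ)/V)) (hb : 6 ≤ b)
    (hw : whl a V ≤ y * (a * V)) (hy : 0 ≤ y) (hlx2 : 0.7394 ≤ 0.92129 * lx) (hM : log ((a:ℝ)*b) ≤ M)
    (he : (4.8/V + 2.6) * log ((a:ℝ)*b) / b ≤ e) (hfin : y * M + e ≤ 0.5501 + (0.92129 * lx - 0.7394) / M) :
    0.04 * (Nat.primeCounting (S a b) : ℝ) ≤ piStar a b := by
  have hd := wheel_decomp a b V ha hab h hV hb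
  have hN' : (2000:ℝ) ≤ (a:ℝ)*b := by exact_mod_cast hN
  have hL : 0 < log ((a:ℝ)*b) := log_pos (by linarith)
  apply core a b V lx ((b:ℝ)/a * whl a V + 2.6 * ((V:ℝ) - 1)) hV hVa hX hN hlx (by linarith)
  have hV' : (0:ℝ) < V := by exact_mod_cast hV
  have ha' : (0:ℝ) < a := by exact_mod_cast (by omega : 0 < a)
  have hb' : (0:ℝ) < b := by exact_mod_cast (by omega : 0 < b)
  set L := log ((a:ℝ)*b) with hLdef
  have h1 : (b:ℝ)/a * whl a V ≤ y * (V * b) := by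
    calc _ ≤ (b:ℝ)/a * (y * (a * V)) := by gcongr
      _ = _ := by field_simp
  calc _ ≤ (y * (V * b) + 2.6 * ((V:ℝ) - 1) + 7.4) * L / ((V:ℝ)*b) := by gcongr
    _ = y * L + (4.8/V + 2.6) * L / b := by field_simp; ring
    _ ≤ y * M + e := by gcongr
    _ ≤ _ := hfin
    _ ≤ _ := by
      gcongr

lemma log_b3 : (17.2167:ℝ) ≤ log 30000000 := by
  rw [show (30000000:ℝ) = 3 * 2^7 * 5^7 by norm_num, log_mul (by norm_num) (by norm_num), log_mul (by norm_num) (by norm_num), log_pow, log_pow]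
  push_cast
  linarith [log_two_gt_d9, log_three_gt_d9, log_five_gt_d9]

lemma cube_root (b : ℕ) : ∃ Q : ℕ, Q^3 ≤ b ∧ b < (Q+1)^3 := by
  induction b with
  | zero => exact ⟨0, by norm_num, by norm_num⟩
  | succ n ih =>
    obtain ⟨Q, h1, h2⟩ := ih
    by_cases h : n + 1 < (Q+1)^3
    · exact ⟨Q, by omega, h⟩
    · refine ⟨Q+1, by omega, ?_⟩
      have : (Q+1)^3 < (Q+1+1)^3 := Nat.pow_lt_pow_left (by omega) (by norm_num)
      omega

lemma log_tan (x c : ℝ) (hx : 0 < x) (hc : 0 < c) : log x ≤ log c + x / c - 1 := by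
  have h := log_le_sub_one_of_pos (show 0 < x / c by positivity)
  rw [log_div (by positivity) (by positivity)] at h
  linarith

lemma sel_err (Q : ℕ) (hQ : 310 ≤ Q) : 6 * log ((Q:ℝ)+1) * ((Q:ℝ)^2+1) ≤ 0.1115 * (Q:ℝ)^3 := by
  have hQ' : (310:ℝ) ≤ Q := by exact_mod_cast hQ
  have h1 := log_tan ((Q:ℝ)+1) (625/2) (by positivity) (by norm_num)
  have h2 : log (625/2:ℝ) ≤ 5.7447 := by
    rw [show (625/2:ℝ) = 5^4/2 by norm_num, log_div (by norm_num) (by norm_num), log_pow]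
    push_cast
    linarith [log_two_gt_d9, log_five_lt_d9]
  have h3 : log ((Q:ℝ)+1) ≤ 0.01852 * Q := by
    rw [div_div_eq_mul_div] at h1
    linarith
  nlinarith [sq_nonneg (Q:ℝ), mul_pos (show (0:ℝ) < Q by linarith) (show (0:ℝ) < Q by linarith)]

lemma sel_fin (a b V : ℕ) (y : ℝ) (ha : 2 ≤ a) (hab : a < b) (h : Nat.Coprime a b) (hV : 1 ≤ V) (hVa : 12 * a ≤ 100 * V)
    (hb : 30000000 ≤ b) (hlx : 1.83 ≤ log ((a:ℝ)/V))
    (hw : (a:ℝ)/Nat.totient a * PhiF a V ≤ y * (a * V)) (hy : 0 ≤ y)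
    (hfin : 3 * y * (log a + log b) ≤ 0.4385 * log b) :
    0.04 * (Nat.primeCounting (S a b) : ℝ) ≤ piStar a b := by
  obtain ⟨Q, hQ1, hQ2⟩ := cube_root b
  have hQ : 310 ≤ Q := by
    by_contra hc
    have : (Q+1)^3 ≤ 310^3 := Nat.pow_le_pow_left (by omega) 3
    omega
  have hQb : Q < b := by nlinarith [Nat.pow_le_pow_left hQ 2]
  have hd := selberg_decomp a b V Q ha hab h hV (by omega) hQb
  have hN : 2000 ≤ a * b := by nlinarith
  have hX : 60 ≤ V * b := by nlinarith
  apply core a b V 1.83 _ hV hVa hX hN hlx (by rw [add_assoc] at hd; exact hd)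
  have hV' : (1:ℝ) ≤ V := by exact_mod_cast hV
  have ha' : (0:ℝ) < a := by exact_mod_cast (by omega : 0 < a)
  have hb' : (30000000:ℝ) ≤ b := by exact_mod_cast hb
  have hb0 : (0:ℝ) < b := by linarith
  have hab' : (a:ℝ) ≤ b := by exact_mod_cast hab.le
  have hQ' : (310:ℝ) ≤ Q := by exact_mod_cast hQ
  have hQ0 : (0:ℝ) < Q := by linarith
  have hLe : log ((a:ℝ)*b) = log a + log b := log_mul (by positivity) (by positivity)
  have hlb : 17.2167 ≤ log b := log_b3.trans (log_le_log (by norm_num) hb')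
  have hla : log a ≤ log b := log_le_log ha' hab'
  have hla0 : 0 ≤ log a := log_natCast_nonneg a
  have hq : log b ≤ 3 * log ((Q:ℝ)+1) := by
    have : (b:ℝ) ≤ ((Q:ℝ)+1)^3 := by exact_mod_cast hQ2.le
    have := log_le_log hb0 this
    rw [log_pow] at this
    exact_mod_cast this
  rw [hLe]
  have hL : 0 < log a + log b := by linarith
  set L := log a + log b with hLdef
  set q := log ((Q:ℝ)+1) with hqdef
  have hq0 : 0 < q := by linarith
  have t1 : (b:ℝ)/a * ((a:ℝ)/Nat.totient a * PhiF a V) / q ≤ y * (V*b) / q := by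
    apply div_le_div_of_nonneg_right _ hq0.le
    calc (b:ℝ)/a * ((a:ℝ)/Nat.totient a * PhiF a V) ≤ (b:ℝ)/a * (y * (a * V)) := mul_le_mul_of_nonneg_left hw (by positivity)
      _ = _ := by field_simp
  have t2 : (1 + (Q:ℝ)^2) * ((V:ℝ) - 1) + 7.4 ≤ (1 + (Q:ℝ)^2) * V := by nlinarith
  have t3 : L * (1 + (Q:ℝ)^2) / b ≤ 0.1115 := by
    rw [div_le_iff₀ hb0]
    have e1 := sel_err Q hQ
    have e2 : (Q:ℝ)^3 ≤ b := by exact_mod_cast hQ1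
    have e3 : L ≤ 6 * q := by linarith
    calc L * (1 + (Q:ℝ)^2) ≤ 6 * q * (1 + (Q:ℝ)^2) := by gcongr
      _ ≤ 0.1115 * (Q:ℝ)^3 := by linarith
      _ ≤ _ := by gcongr
  have t4 : y * L / q ≤ 0.4385 := by
    rw [div_le_iff₀ hq0]
    nlinarith
  calc _ ≤ (y * (V*b) / q + (1 + (Q:ℝ)^2) * V) * L / ((V:ℝ)*b) := by
        apply div_le_div_of_nonneg_right _ (by positivity)
        apply mul_le_mul_of_nonneg_right _ hL.le
        linarith
    _ = y * L / q + L * (1 + (Q:ℝ)^2) / b := by field_simp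
    _ ≤ 0.5501 + 0 := by linarith
    _ ≤ _ := by gcongr; apply div_nonneg _ hL.le; norm_num

end

section
open Real

def VV (a : ℕ) : ℕ := (12*a+99)/100

lemma VV_lo (a : ℕ) : 12 * a ≤ 100 * VV a := by unfold VV; omega
lemma VV_hi (a : ℕ) : 100 * VV a ≤ 12 * a + 99 := by unfold VV; omega

lemma log_x_aux (a : ℕ) (c : ℝ) (ha : 19 ≤ a) (hc : 0 < c) (h : c * VV a ≤ a) : log c ≤ log ((a:ℝ)/VV a) := by
  have h1 := VV_lo a
  have h0 : 0 < VV a := by omega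
  have h0' : (0:ℝ) < VV a := by exact_mod_cast h0
  apply log_le_log hc
  rw [le_div_iff₀ h0']; exact h

lemma lx1 (a : ℕ) (ha : 19 ≤ a) : 1.83 ≤ log ((a:ℝ)/VV a) := by
  have h4 : 25 * VV a ≤ 4 * a := by
    have hh := VV_hi a
    rcases Nat.lt_or_ge a 25 with c | c
    · have : VV a ≤ 3 := by omega
      omega
    · omega
  have h4' : (25:ℝ) * VV a ≤ 4 * a := by exact_mod_cast h4
  refine le_trans ?_ (log_x_aux a (25/4) ha (by norm_num) (by linarith))
  rw [show (25/4:ℝ) = 5^2/2^2 by norm_num, log_div (by norm_num) (by norm_num), log_pow, log_pow]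
  push_cast
  linarith [log_two_lt_d9, log_five_gt_d9]

lemma lx2 (a : ℕ) (ha : 100 ≤ a) : 2.03 ≤ log ((a:ℝ)/VV a) := by
  have h4 : 192 * VV a ≤ 25 * a := by
    have := VV_hi a; omega
  have h4' : (192:ℝ) * VV a ≤ 25 * a := by exact_mod_cast h4
  refine le_trans ?_ (log_x_aux a (192/25) (by omega) (by norm_num) (by linarith))
  rw [show (192/25:ℝ) = 2^6*3/5^2 by norm_num, log_div (by norm_num) (by norm_num), log_mul (by norm_num) (by norm_num), log_pow, log_pow]
  push_cast
  linarith [log_two_gt_d9, log_five_lt_d9, log_three_gt_d9]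

lemma lx3 (a : ℕ) (ha : 1000 ≤ a) : 2.09 ≤ log ((a:ℝ)/VV a) := by
  have h4 : 81 * VV a ≤ 10 * a := by
    have := VV_hi a; omega
  have h4' : (81:ℝ) * VV a ≤ 10 * a := by exact_mod_cast h4
  refine le_trans ?_ (log_x_aux a (81/10) (by omega) (by norm_num) (by linarith))
  rw [show (81/10:ℝ) = 3^4/(2*5) by norm_num, log_div (by norm_num) (by norm_num), log_mul (by norm_num) (by norm_num), log_pow]
  push_cast
  linarith [log_two_lt_d9, log_five_lt_d9, log_three_gt_d9]

set_option maxRecDepth 100000 in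
lemma tabW : ∀ a < 100, 19 ≤ a → 40 * (Nat.totient (30 / Nat.gcd a 30) * PhiF a (VV a)) ≤ (30 / Nat.gcd a 30) * (a * VV a) := by
  decide +kernel

set_option maxRecDepth 100000 in
lemma tabS : ∀ a < 100, 19 ≤ a → 125 * (a * PhiF a (VV a)) ≤ 12 * (Nat.totient a * (a * VV a)) := by
  decide +kernel

lemma whl_small (a : ℕ) (h1 : 19 ≤ a) (h2 : a < 100) : whl a (VV a) ≤ 0.025 * (a * VV a) := by
  have h := tabW a h2 h1
  unfold whl
  have hm := div30_pos _ (div30_facts _ (gcd30_mem a)).1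
  set m := 30 / Nat.gcd a 30
  have hm' : (0:ℝ) < m := by exact_mod_cast hm
  have h' : (40:ℝ) * (Nat.totient m * PhiF a (VV a)) ≤ m * (a * VV a) := by exact_mod_cast h
  rw [div_mul_eq_mul_div, div_le_iff₀ hm']
  linarith

lemma sel_small (a : ℕ) (h1 : 19 ≤ a) (h2 : a < 100) : (a:ℝ)/Nat.totient a * PhiF a (VV a) ≤ 0.096 * (a * VV a) := by
  have h := tabS a h2 h1
  have ht : (0:ℝ) < Nat.totient a := by exact_mod_cast Nat.totient_pos.2 (by omega)
  have h' : (125:ℝ) * (a * PhiF a (VV a)) ≤ 12 * (Nat.totient a * (a * VV a)) := by exact_mod_cast h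
  rw [div_mul_eq_mul_div, div_le_iff₀ ht]
  linarith

lemma V2_mid (a : ℕ) (h1 : 100 ≤ a) : ((VV a:ℝ))^2/2 + 3.25 ≤ 0.0677 * (a * VV a) := by
  have hl : (12:ℝ) * a ≤ 100 * VV a := by exact_mod_cast VV_lo a
  have hh : (100:ℝ) * VV a ≤ 12 * a + 99 := by exact_mod_cast VV_hi a
  have ha : (100:ℝ) ≤ a := by exact_mod_cast h1
  nlinarith

lemma V2_big (a : ℕ) (h1 : 1000 ≤ a) : ((VV a:ℝ))^2/2 + 3.25 ≤ 0.060525 * (a * VV a) := by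
  have hl : (12:ℝ) * a ≤ 100 * VV a := by exact_mod_cast VV_lo a
  have hh : (100:ℝ) * VV a ≤ 12 * a + 99 := by exact_mod_cast VV_hi a
  have ha : (1000:ℝ) ≤ a := by exact_mod_cast h1
  nlinarith

lemma whl_mid (a : ℕ) (h1 : 100 ≤ a) : whl a (VV a) ≤ 0.0181 * (a * VV a) := by
  have := whl_le a (VV a)
  have := V2_mid a h1
  have h0 : (0:ℝ) ≤ a * VV a := by positivity
  linarith

lemma whl_big (a : ℕ) (h1 : 1000 ≤ a) : whl a (VV a) ≤ 0.01615 * (a * VV a) := by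
  have := whl_le a (VV a)
  have := V2_big a h1
  have h0 : (0:ℝ) ≤ a * VV a := by positivity
  linarith

lemma sel_mid (a : ℕ) (h1 : 100 ≤ a) (h2 : a < 323323) : (a:ℝ)/Nat.totient a * PhiF a (VV a) ≤ 0.10001 * (a * VV a) := by
  have := Phi_mid a (VV a) (by omega) h2
  have := V2_mid a h1
  have h0 : (0:ℝ) ≤ a * VV a := by positivity
  linarith

lemma sel_big (a : ℕ) (h1 : 1000 ≤ a) (h2 : a < 323323) : (a:ℝ)/Nat.totient a * PhiF a (VV a) ≤ 0.08941 * (a * VV a) := by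
  have := Phi_mid a (VV a) (by omega) h2
  have := V2_big a h1
  have h0 : (0:ℝ) ≤ a * VV a := by positivity
  linarith

lemma sel_huge (a : ℕ) (r y : ℝ) (hr : 0 < r) (h1 : 40000 ≤ a) (h2 : r^2 ≤ a) (hy : 0.06002 + 5.48/r ≤ y) :
    (a:ℝ)/Nat.totient a * PhiF a (VV a) ≤ y * (a * VV a) := by
  have h := Phi_large a (VV a) (by omega)
  have hh : (100:ℝ) * VV a ≤ 12 * a + 99 := by exact_mod_cast VV_hi a
  have ha : (40000:ℝ) ≤ a := by exact_mod_cast h1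
  have hs : r ≤ √a := le_sqrt_of_sq_le h2
  have hss : √(a:ℝ) * √a = a := mul_self_sqrt (by positivity)
  have e1 : √(a:ℝ) ≤ a / r := by
    rw [le_div_iff₀ hr]
    calc √(a:ℝ) * r ≤ √a * √a := by gcongr
      _ = a := hss
  have hV0 : (0:ℝ) ≤ VV a := by positivity
  have e2 : ((VV a:ℝ))^2/2 ≤ 0.06002 * (a * VV a) := by nlinarith
  have e3 : 5.48 * √(a:ℝ) * VV a ≤ 5.48/r * (a * VV a) := by
    calc 5.48 * √(a:ℝ) * VV a ≤ 5.48 * (a/r) * VV a := by gcongr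
      _ = _ := by ring
  have e4 : (0.06002 + 5.48/r) * (a * VV a) ≤ y * (a * VV a) := by gcongr
  nlinarith

lemma log_le_aux (n : ℕ) (i j k : ℕ) (h : n ≤ 2^i*3^j*5^k) (hn : 1 ≤ n) :
    log (n:ℝ) ≤ i * 0.6931471808 + j * 1.0986122888 + k * 1.6094379126 := by
  have h' : (n:ℝ) ≤ 2^i*3^j*5^k := by exact_mod_cast h
  have hn' : (0:ℝ) < n := by exact_mod_cast hn
  have := log_le_log hn' h'
  rw [log_mul (by positivity) (by positivity), log_mul (by positivity) (by positivity), log_pow, log_pow, log_pow] at this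
  have h2 : (i:ℝ) * log 2 ≤ i * 0.6931471808 := by gcongr; exact log_two_lt_d9.le
  have h3 : (j:ℝ) * log 3 ≤ j * 1.0986122888 := by gcongr; exact log_three_lt_d9.le
  have h5 : (k:ℝ) * log 5 ≤ k * 1.6094379126 := by gcongr; exact log_five_lt_d9.le
  linarith

lemma reg3 (a b : ℕ) (ha : 19 ≤ a) (hab : a < b) (h : Nat.Coprime a b) (hb : 30000000 ≤ b) :
    0.04 * (Nat.primeCounting (S a b) : ℝ) ≤ piStar a b := by
  have hVl := VV_lo a
  have hlx := lx1 a ha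
  have hb' : (30000000:ℝ) ≤ b := by exact_mod_cast hb
  have hlb : 17.2167 ≤ log (b:ℝ) := log_b3.trans (log_le_log (by norm_num) hb')
  have fin : ∀ y : ℝ, 0 ≤ y → (a:ℝ)/Nat.totient a * PhiF a (VV a) ≤ y * (a * VV a) →
     3 * y * (log a + log b) ≤ 0.4385 * log b → 0.04 * (Nat.primeCounting (S a b) : ℝ) ≤ piStar a b :=
    fun y hy h1 h2 => sel_fin a b (VV a) y (by omega) hab h (by omega) hVl hb hlx h1 hy h2
  have ha0 : 1 ≤ a := by omega
  rcases lt_or_ge a 100 with c | c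
  · have l := log_le_aux a 2 0 2 (by norm_num; omega) ha0
    norm_num at l
    exact fin 0.096 (by norm_num) (sel_small a ha c) (by linarith)
  rcases lt_or_ge a 1000 with c1 | c1
  · have l := log_le_aux a 3 0 3 (by norm_num; omega) ha0
    norm_num at l
    exact fin 0.10001 (by norm_num) (sel_mid a c (by omega)) (by linarith)
  rcases lt_or_ge a 40000 with c2 | c2
  · have l := log_le_aux a 6 0 4 (by norm_num; omega) ha0
    norm_num at l
    exact fin 0.08941 (by norm_num) (sel_big a c1 (by omega)) (by linarith)
  have c2' : (40000:ℝ) ≤ a := by exact_mod_cast c2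
  rcases lt_or_ge a 90000 with c3 | c3
  · have l := log_le_aux a 4 2 4 (by norm_num; omega) ha0
    norm_num at l
    exact fin 0.08743 (by norm_num) (sel_huge a 200 _ (by norm_num) c2 (by norm_num; linarith) (by norm_num)) (by linarith)
  have c3' : (90000:ℝ) ≤ a := by exact_mod_cast c3
  rcases lt_or_ge a 200000 with c4 | c4
  · have l := log_le_aux a 6 0 5 (by norm_num; omega) ha0
    norm_num at l
    exact fin 0.0784 (by norm_num) (sel_huge a 300 _ (by norm_num) c2 (by norm_num; linarith) (by norm_num)) (by linarith)
  have c4' : (200000:ℝ) ≤ a := by exact_mod_cast c4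
  have l : log (a:ℝ) ≤ log b := log_le_log (by linarith) (by exact_mod_cast hab.le)
  exact fin 0.0723 (by norm_num) (sel_huge a 447.2 _ (by norm_num) c2 (by norm_num; linarith) (by norm_num)) (by linarith)

lemma reg2_small (a b : ℕ) (ha : 19 ≤ a) (ha2 : a < 100) (hab : a < b) (h : Nat.Coprime a b) (hb : b < 200) (hN : 2000 ≤ a * b) :
    0.04 * (Nat.primeCounting (S a b) : ℝ) ≤ piStar a b := by
  have hVl := VV_lo a
  have hVh := VV_hi a
  have hd := wheel_decomp a b (VV a) (by omega) hab h (by omega) (by omega)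
  have hu := pi_S_le a b hN
  have hw := whl_small a ha ha2
  have hX1 : 240 ≤ VV a * b := by nlinarith
  have hV12 : VV a ≤ 12 := by omega
  have hX2 : VV a * b ≤ 2400 := by nlinarith
  have hl := pi_lin _ hX1 hX2
  have hl' : ((VV a:ℝ) * b) + 160 ≤ 8 * Nat.primeCounting (VV a * b) := by exact_mod_cast hl
  have hN' : (2000:ℝ) ≤ (a:ℝ)*b := by exact_mod_cast hN
  have hL : 7.6 ≤ log ((a:ℝ)*b) := by
    refine le_trans ?_ (log_le_log (by norm_num) hN')
    rw [show (2000:ℝ) = 2^4*5^3 by norm_num, log_mul (by norm_num) (by norm_num), log_pow, log_pow]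
    push_cast
    linarith [log_two_gt_d9, log_five_gt_d9]
  have u1 : 1.1135 * ((a:ℝ)*b) / log ((a:ℝ)*b) ≤ 1.1135 * ((a:ℝ)*b) / 7.6 := by gcongr
  have u2 : 2.2181 * ((a:ℝ)*b) / log ((a:ℝ)*b)^2 ≤ 2.2181 * ((a:ℝ)*b) / 7.6^2 := by gcongr
  have ha' : (0:ℝ) < a := by exact_mod_cast (by omega : 0 < a)
  have w : (b:ℝ)/a * whl a (VV a) ≤ 0.025 * (VV a * b) := by
    calc (b:ℝ)/a * whl a (VV a) ≤ (b:ℝ)/a * (0.025 * (a * VV a)) := mul_le_mul_of_nonneg_left hw (by positivity)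
      _ = _ := by field_simp
  have hVl' : (12:ℝ) * a ≤ 100 * VV a := by exact_mod_cast hVl
  have hX1' : (240:ℝ) ≤ VV a * b := by exact_mod_cast hX1
  have hb0 : (0:ℝ) ≤ b := by positivity
  have k1 : 0.12 * ((a:ℝ) * b) ≤ VV a * b := by nlinarith
  have k2 : 2.6 * (VV a:ℝ) - 20.2 ≤ 0.0383 * (VV a * b) := by
    rcases lt_or_ge b 68 with c | c
    · have : VV a ≤ 9 := by omega
      have : (VV a:ℝ) ≤ 9 := by exact_mod_cast this
      linarith
    · have : (68:ℝ) ≤ b := by exact_mod_cast c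
      have : (0:ℝ) ≤ VV a := by positivity
      nlinarith
  norm_num at u1 u2
  linarith

lemma err_aux (V b : ℕ) (L k v e : ℝ) (hV : v ≤ V) (hv : 0 < v) (hL0 : 0 ≤ L) (hb : 0 < b) (hk : 4.8 / v + 2.6 ≤ k) (he : k * L ≤ e * b) :
    (4.8/(V:ℝ) + 2.6) * L / b ≤ e := by
  have hb' : (0:ℝ) < b := by exact_mod_cast hb
  rw [div_le_iff₀ hb']
  refine le_trans ?_ he
  apply mul_le_mul_of_nonneg_right _ hL0
  refine le_trans ?_ hk
  gcongr

lemma reg2 (a b : ℕ) (ha : 19 ≤ a) (hab : a < b) (h : Nat.Coprime a b) (hb : b < 30000000) (hN : 2000 ≤ a * b) :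
    0.04 * (Nat.primeCounting (S a b) : ℝ) ≤ piStar a b := by
  by_cases c0 : a < 100 ∧ b < 200
  · exact reg2_small a b ha c0.1 hab h c0.2 hN
  have hVl := VV_lo a
  have hX : 60 ≤ VV a * b := by nlinarith
  have hN' : (2000:ℝ) ≤ (a:ℝ)*b := by exact_mod_cast hN
  have hL0 : 0 ≤ log ((a:ℝ)*b) := log_nonneg (by linarith)
  have hba : 0 < b := by omega
  have hV1 : 1 ≤ VV a := by omega
  have hab1 : 1 ≤ a * b := by omega
  have hcast : ((a * b : ℕ):ℝ) = (a:ℝ)*b := by push_cast; ring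
  rcases lt_or_ge a 100 with c | c
  · have hb2 : 200 ≤ b := by omega
    have hV3 : 3 ≤ VV a := by omega
    have hV3' : (3:ℝ) ≤ VV a := by exact_mod_cast hV3
    have hlx := lx1 a ha
    rcases lt_or_ge b 3000 with c1 | c1
    · have l := log_le_aux (a*b) 5 1 5 (by norm_num; nlinarith) hab1
      rw [hcast] at l
      norm_num at l
      have hb2' : (200:ℝ) ≤ b := by exact_mod_cast hb2
      exact whl_fin a b (VV a) 1.83 0.025 12.62 0.266 (by omega) hab h hV1 hVl hX hN hlx (by omega) (whl_small a ha c) (by norm_num) (by norm_num)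
        (by linarith) (err_aux _ _ _ 4.2 3 _ hV3' (by norm_num) hL0 hba (by norm_num) (by linarith)) (by norm_num)
    · have l := log_le_aux (a*b) 9 1 9 (by norm_num; nlinarith) hab1
      rw [hcast] at l
      norm_num at l
      have hb2' : (3000:ℝ) ≤ b := by exact_mod_cast c1
      exact whl_fin a b (VV a) 1.83 0.025 21.83 0.0307 (by omega) hab h hV1 hVl hX hN hlx (by omega) (whl_small a ha c) (by norm_num) (by norm_num)
        (by linarith) (err_aux _ _ _ 4.2 3 _ hV3' (by norm_num) hL0 hba (by norm_num) (by linarith)) (by norm_num)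
  have ha0' : (0:ℝ) < a := by exact_mod_cast (by omega : 0 < a)
  have hb0' : (0:ℝ) < b := by exact_mod_cast (by omega : 0 < b)
  have hLL : log ((a:ℝ)*b) ≤ 2 * log b := by
    rw [log_mul ha0'.ne' hb0'.ne']
    have : log (a:ℝ) ≤ log b := log_le_log ha0' (by exact_mod_cast hab.le)
    linarith
  rcases lt_or_ge a 1000 with c1 | c1
  · have hlx := lx2 a c
    have hV3 : 12 ≤ VV a := by omega
    have hV3' : (12:ℝ) ≤ VV a := by exact_mod_cast hV3
    rcases lt_or_ge b 3000 with c2 | c2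
    · have l := log_le_aux (a*b) 6 1 6 (by norm_num; nlinarith) hab1
      rw [hcast] at l
      norm_num at l
      have hb2' : (100:ℝ) ≤ b := by exact_mod_cast (by omega : 100 ≤ b)
      have t := log_tan b 100 hb0' (by norm_num)
      have l100 := log_le_aux 100 2 0 2 (by norm_num) (by norm_num)
      norm_num at l100
      exact whl_fin a b (VV a) 2.03 0.0181 14.92 0.28 (by omega) hab h hV1 hVl hX hN hlx (by omega) (whl_mid a c) (by norm_num) (by norm_num)
        (by linarith) (err_aux _ _ _ 3 12 _ hV3' (by norm_num) hL0 hba (by norm_num) (by linarith)) (by norm_num)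
    · have l := log_le_aux (a*b) 10 1 10 (by norm_num; nlinarith) hab1
      rw [hcast] at l
      norm_num at l
      have hb2' : (3000:ℝ) ≤ b := by exact_mod_cast c2
      exact whl_fin a b (VV a) 2.03 0.0181 24.2 0.025 (by omega) hab h hV1 hVl hX hN hlx (by omega) (whl_mid a c) (by norm_num) (by norm_num)
        (by linarith) (err_aux _ _ _ 3 12 _ hV3' (by norm_num) hL0 hba (by norm_num) (by linarith)) (by norm_num)
  · have hlx := lx3 a c1
    have hV3 : 120 ≤ VV a := by omega
    have hV3' : (120:ℝ) ≤ VV a := by exact_mod_cast hV3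
    rcases lt_or_ge b 100000 with c2 | c2
    · have l := log_le_aux b 5 0 5 (by norm_num; omega) (by omega)
      norm_num at l
      have hb2' : (1000:ℝ) ≤ b := by exact_mod_cast (by omega : 1000 ≤ b)
      exact whl_fin a b (VV a) 2.09 0.01615 23.1 0.065 (by omega) hab h hV1 hVl hX hN hlx (by omega) (whl_big a c1) (by norm_num) (by norm_num)
        (by linarith) (err_aux _ _ _ 2.64 120 _ hV3' (by norm_num) hL0 hba (by norm_num) (by linarith)) (by norm_num)
    · have l := log_le_aux b 7 1 7 (by norm_num; omega) (by omega)
      norm_num at l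
      have hb2' : (100000:ℝ) ≤ b := by exact_mod_cast c2
      exact whl_fin a b (VV a) 2.09 0.01615 34.44 0.001 (by omega) hab h hV1 hVl hX hN hlx (by omega) (whl_big a c1) (by norm_num) (by norm_num)
        (by linarith) (err_aux _ _ _ 2.64 120 _ hV3' (by norm_num) hL0 hba (by norm_num) (by linarith)) (by norm_num)

lemma reg1_big (a b : ℕ) (ha : 2 ≤ a) (ha2 : a ≤ 18) (hab : a < b) (h : Nat.Coprime a b) (hb : 400 ≤ b) :
    0.04 * (Nat.primeCounting (S a b) : ℝ) ≤ piStar a b := by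
  have h1 := simple_lower a b ha hab h
  have h2 : Nat.primeCounting b ≤ Nat.primeCounting (b-1) + 1 := by
    obtain ⟨n, rfl⟩ : ∃ n, b = n + 1 := ⟨b - 1, by omega⟩
    simp only [Nat.add_sub_cancel, Nat.primeCounting, Nat.primeCounting', Nat.count_succ _ (n+1)]
    split_ifs <;> omega
  have h3 : (Nat.primeCounting b : ℝ) ≤ piStar a b + 2 := by exact_mod_cast (by omega : Nat.primeCounting b ≤ piStar a b + 2)
  have hS : S a b ≤ 18 * b := (S_le a b).trans (by gcongr)
  have hS' : (Nat.primeCounting (S a b) : ℝ) ≤ Nat.primeCounting (18*b) := by exact_mod_cast Nat.monotone_primeCounting hS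
  have hu := pi_upper (18*b) (by omega)
  have hl := pi_lower b (by omega)
  push_cast at hu
  have hb' : (400:ℝ) ≤ b := by exact_mod_cast hb
  have hb0 : (0:ℝ) < b := by linarith
  have e : log (18 * (b:ℝ)) = log 18 + log b := log_mul (by norm_num) hb0.ne'
  have h18 : 2.89 ≤ log (18:ℝ) := by
    rw [show (18:ℝ) = 2*3^2 by norm_num, log_mul (by norm_num) (by norm_num), log_pow]
    push_cast
    linarith [log_two_gt_d9, log_three_gt_d9]
  have t := log_tan b 400 hb0 (by norm_num)
  have l400 := log_le_aux 400 4 0 2 (by norm_num) (by norm_num)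
  norm_num at l400
  have hl0 : 0 < log (b:ℝ) := log_pos (by linarith)
  set l := log (b:ℝ) with hldef
  set L := log (18 * (b:ℝ)) with hLdef
  have hLl : l + 2.89 ≤ L := by linarith
  have hL0 : 0 < L := by linarith
  have e2 : (1.1135 * (18 * (b:ℝ)) + 10 * L) / L = 20.043 * (b / L) + 10 := by field_simp; ring
  have e3 : 2.2181 * (18 * (b:ℝ)) / L^2 = 39.9258 * (b / L^2) := by ring
  rw [e2, e3] at hu
  have hP : 0.92129 * (b / l) - 5 ≤ (Nat.primeCounting b : ℝ) := by
    rw [sub_le_iff_le_add, ← mul_div_assoc, div_le_iff₀ hl0]; linarith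
  have key : 0.80172 * (b / L) + 1.597032 * (b / L^2) + 7.4 ≤ 0.92129 * (b / l) := by
    have k1 : 7.4 ≤ 0.111 * (b/l) := by
      rw [← mul_div_assoc, le_div_iff₀ hl0]
      linarith
    have k2 : b / L^2 * 2.89 ≤ b / l - b / L := by
      rw [div_sub_div _ _ hl0.ne' hL0.ne', div_mul_eq_mul_div, div_le_div_iff₀ (by positivity) (by positivity)]
      have : b * 2.89 * (l * L) ≤ b * (L - l) * L^2 := by
        have i1 : 2.89 * (l * L) ≤ (L - l) * L^2 := by
          have : l * L ≤ L^2 := by nlinarith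
          have : 0 < L^2 := by positivity
          have : 0 < l * L := by positivity
          nlinarith
        nlinarith
      linarith
    have k3 : 0 ≤ (b:ℝ) / L^2 := by positivity
    have k4 : 0 ≤ (b:ℝ) / l := by positivity
    linarith
  linarith


end

theorem piStar_ge_004_pi (a b : ℕ) (ha : 1 ≤ a) (hab : a < b)
    (h : Nat.Coprime a b) :
    (0.04 : ℝ) * (Nat.primeCounting (S a b) : ℝ) ≤ (piStar a b : ℝ) := by
  have conv : Nat.primeCounting (S a b) ≤ 25 * piStar a b → (0.04 : ℝ) * (Nat.primeCounting (S a b) : ℝ) ≤ (piStar a b : ℝ) := by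
    intro hh
    have : (Nat.primeCounting (S a b) : ℝ) ≤ 25 * piStar a b := by exact_mod_cast hh
    linarith
  rcases Nat.lt_or_ge a 2 with c | c
  · obtain rfl : a = 1 := by omega
    have : S 1 b = 0 := by unfold S; omega
    rw [this]
    simp
  rcases Nat.lt_or_ge 2000 (a*b) with c1 | c1
  · rcases Nat.lt_or_ge 18 a with c2 | c2
    · rcases Nat.lt_or_ge b 30000000 with c3 | c3
      · exact reg2 a b (by omega) hab h c3 (by omega)
      · exact reg3 a b (by omega) hab h c3
    · have hb : 112 ≤ b := by nlinarith
      rcases Nat.lt_or_ge b 400 with c3 | c3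
      · exact conv (reg1 a b c c2 hab h hb c3)
      · exact reg1_big a b c c2 hab h c3
  · exact conv (reg0 a b c hab h c1)
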